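/- arXiv:1201.1073 — 2 statements merged into one kernel-verified Lean document; each statement's English description precedes it below -/
import Mathlib

section
/- Let Ω be a non-empty closed discrete subset of ℂ. The space R̂_Ω of Ω-continuable holomorphic germs at 0 is stable under convolution if and only if Ω is stable under addition (i.e., ω₁, ω₂ ∈ Ω implies ω₁ + ω₂ ∈ Ω). -/
open Set Metric Filter Topology intervalIntegral

noncomputable section

/-- A path `γ : [a,b] → ℂ` which is piecewise `C¹`. -/
def PiecewiseC1On (γ : ℝ → ℂ) (a b : ℝ) : Prop :=
  ContinuousOn γ (Set.Icc a b) ∧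
  ∃ (n : ℕ) (u : ℕ → ℝ), u 0 = a ∧ u n = b ∧ (∀ i < n, u i ≤ u (i + 1)) ∧
    ∀ i < n, ContDiffOn ℝ 1 γ (Set.Icc (u i) (u (i + 1)))

/-- The germ at `γ a` of the function `f` admits analytic continuation along
`γ` restricted to `[a,b]`, resulting in the germ of `g` at `γ b`.  This is the
usual definition via a family of analytic elements `(F t, r t)` along the path
which are locally compatible. -/
def ContAlong (f : ℂ → ℂ) (γ : ℝ → ℂ) (a b : ℝ) (g : ℂ → ℂ) : Prop :=
  ∃ (F : ℝ → ℂ → ℂ) (r : ℝ → ℝ),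
    (∀ t ∈ Set.Icc a b, 0 < r t ∧ AnalyticOnNhd ℂ (F t) (Metric.ball (γ t) (r t))) ∧
    (∀ t ∈ Set.Icc a b, ∃ ε > 0, ∀ t' ∈ Set.Icc a b, |t' - t| < ε →
      Set.EqOn (F t) (F t') (Metric.ball (γ t) (r t) ∩ Metric.ball (γ t') (r t'))) ∧
    (∀ᶠ z in 𝓝 (γ a), F a z = f z) ∧
    (∀ᶠ z in 𝓝 (γ b), F b z = g z)

/-- The germ of `f` at `γ a` admits analytic continuation along `γ|[a,b]`. -/
def ContinuableAlong (f : ℂ → ℂ) (γ : ℝ → ℂ) (a b : ℝ) : Prop :=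
  ∃ g, ContAlong f γ a b g

/-- `f` is an `Ω`-continuable holomorphic germ at `0`: it is holomorphic on some
disc `D_R` with `D_R∖{0}` disjoint from `Ω`, and admits analytic continuation
along every (piecewise `C¹`) path of `ℂ∖Ω` originating from any point of `D_R∖{0}`. -/
def OmegaCont (Ω : Set ℂ) (f : ℂ → ℂ) : Prop :=
  ∃ R > 0, AnalyticOnNhd ℂ f (Metric.ball 0 R) ∧
    (∀ ζ ∈ Metric.ball (0:ℂ) R, ζ ≠ 0 → ζ ∉ Ω) ∧
    ∀ γ : ℝ → ℂ, PiecewiseC1On γ 0 1 → γ 0 ∈ Metric.ball (0:ℂ) R → γ 0 ≠ 0 →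
      (∀ t ∈ Set.Icc (0:ℝ) 1, γ t ∉ Ω) → ContinuableAlong f γ 0 1

/-- Convolution of two germs: `(f ⋆ g)(ζ) = ∫₀^ζ f(ξ) g(ζ-ξ) dξ`, the integral
being taken over the line segment from `0` to `ζ`. -/
def conv (f g : ℂ → ℂ) (ζ : ℂ) : ℂ :=
  ζ * ∫ t in (0:ℝ)..1, f ((t : ℂ) * ζ) * g ((1 - (t : ℂ)) * ζ)

/-- Germ-chain along `H` over `[0,1]`. -/
def GChain (H : ℝ → ℂ) (F : ℝ → ℂ → ℂ) : Prop :=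
  ∀ s₀ ∈ Icc (0:ℝ) 1, AnalyticAt ℂ (F s₀) (H s₀) ∧
    ∀ᶠ s in 𝓝[Icc 0 1] s₀, F s =ᶠ[𝓝 (H s)] F s₀

lemma germ_iff {φ ψ : ℂ → ℂ} {z₀ : ℂ} (hφ : AnalyticAt ℂ φ z₀) (hψ : AnalyticAt ℂ ψ z₀) :
    ∀ᶠ z in 𝓝 z₀, (φ =ᶠ[𝓝 z] ψ ↔ φ =ᶠ[𝓝 z₀] ψ) := by
  rcases hφ.eventually_eq_or_eventually_ne hψ with h | h
  · have h' : φ =ᶠ[𝓝 z₀] ψ := h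
    filter_upwards [eventually_eventually_nhds.2 h] with z hz
    exact ⟨fun _ => h', fun _ => hz⟩
  · rw [eventually_nhdsWithin_iff] at h
    filter_upwards [h] with z hz
    by_cases hzz : z = z₀
    · rw [hzz]
    · constructor
      · intro h1; exact absurd h1.eq_of_nhds (hz hzz)
      · intro h1
        exfalso
        have h2 : ∀ᶠ z in 𝓝[≠] z₀, φ z = ψ z := nhdsWithin_le_nhds h1
        have h3 := h2.and (eventually_nhdsWithin_iff.2 h)
        obtain ⟨w, hw1, hw2⟩ := h3.exists
        exact hw2 hw1

lemma GChain.unique {H : ℝ → ℂ} {F F' : ℝ → ℂ → ℂ} (hH : ContinuousOn H (Icc 0 1))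
    (hF : GChain H F) (hF' : GChain H F') (h0 : F 0 =ᶠ[𝓝 (H 0)] F' 0) :
    ∀ s ∈ Icc (0:ℝ) 1, F s =ᶠ[𝓝 (H s)] F' s := by
  intro s hs
  have key := (isPreconnected_Icc (a := (0:ℝ)) (b := 1)).induction₂
    (fun x y => (F x =ᶠ[𝓝 (H x)] F' x) ↔ (F y =ᶠ[𝓝 (H y)] F' y)) ?_ ?_ ?_
    (x := 0) (y := s) (by simp) hs
  · exact key.1 h0
  · intro x hx
    have h1 := (hH x hx).eventually (germ_iff (hF x hx).1 (hF' x hx).1)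
    filter_upwards [h1, (hF x hx).2, (hF' x hx).2] with y h1 h2 h3
    rw [← h1]
    constructor
    · intro h; exact h2.trans (h.trans h3.symm)
    · intro h; exact h2.symm.trans (h.trans h3)
  · intro x y z _ _ _ h1 h2; exact h1.trans h2
  · intro x y _ _ h; exact h.symm

lemma GChain.congr {H : ℝ → ℂ} {F F' : ℝ → ℂ → ℂ} (hH : ContinuousOn H (Icc 0 1))
    (hF : GChain H F) (h : ∀ s ∈ Icc (0:ℝ) 1, F' s =ᶠ[𝓝 (H s)] F s) : GChain H F' := by
  intro s₀ hs₀
  refine ⟨(hF s₀ hs₀).1.congr (h s₀ hs₀).symm, ?_⟩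
  have h1 := (hH s₀ hs₀).eventually (eventually_eventually_nhds.2 (h s₀ hs₀))
  filter_upwards [h1, (hF s₀ hs₀).2, self_mem_nhdsWithin] with s h1 h2 h3
  exact (h s h3).trans (h2.trans (EventuallyEq.symm h1))

lemma gchain_of_contAlong {f g : ℂ → ℂ} {γ : ℝ → ℂ} (hγ : ContinuousOn γ (Icc 0 1))
    (h : ContAlong f γ 0 1 g) : ∃ F, GChain γ F ∧ F 0 =ᶠ[𝓝 (γ 0)] f := by
  obtain ⟨F, r, h1, h2, h3, -⟩ := h
  refine ⟨F, ?_, h3⟩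
  intro t ht
  refine ⟨(h1 t ht).2 _ (mem_ball_self (h1 t ht).1), ?_⟩
  obtain ⟨ε, hε, h4⟩ := h2 t ht
  have h5 : ∀ᶠ t' in 𝓝[Icc 0 1] t, |t' - t| < ε :=
    nhdsWithin_le_nhds (by
      filter_upwards [Metric.ball_mem_nhds t hε] with x hx
      rwa [mem_ball, Real.dist_eq] at hx)
  have h6 := (hγ t ht).eventually (isOpen_ball.mem_nhds (mem_ball_self (h1 t ht).1))
  filter_upwards [h5, h6, self_mem_nhdsWithin] with t' h5 h6 h7
  have := h4 t' h7 h5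
  filter_upwards [(isOpen_ball.inter isOpen_ball).mem_nhds
    (⟨h6, mem_ball_self (h1 t' h7).1⟩ : γ t' ∈ ball (γ t) (r t) ∩ ball (γ t') (r t'))] with z hz
  exact (this hz).symm

lemma contAlong_of_gchain {f : ℂ → ℂ} {γ : ℝ → ℂ} (hγ : ContinuousOn γ (Icc 0 1))
    {F : ℝ → ℂ → ℂ} (hF : GChain γ F) (h0 : F 0 =ᶠ[𝓝 (γ 0)] f) : ContinuableAlong f γ 0 1 := by
  have : ∀ t, ∃ r : ℝ, t ∈ Icc (0:ℝ) 1 → 0 < r ∧ AnalyticOnNhd ℂ (F t) (ball (γ t) r) := by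
    intro t
    by_cases ht : t ∈ Icc (0:ℝ) 1
    · obtain ⟨r, hr, h⟩ := (hF t ht).1.exists_ball_analyticOnNhd
      exact ⟨r, fun _ => ⟨hr, h⟩⟩
    · exact ⟨0, fun h => absurd h ht⟩
  choose r hr using this
  refine ⟨F 1, F, r, hr, ?_, h0, Eventually.of_forall fun _ => rfl⟩
  intro t ht
  have h6 := (hγ t ht).eventually (isOpen_ball.mem_nhds (mem_ball_self (hr t ht).1))
  obtain ⟨ε, hε, h7⟩ := Metric.mem_nhdsWithin_iff.1 (h6.and (hF t ht).2)
  refine ⟨ε, hε, fun t' ht' htt' => ?_⟩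
  obtain ⟨h8, h9⟩ := h7 ⟨by simpa [Real.dist_eq] using htt', ht'⟩
  refine AnalyticOnNhd.eqOn_of_preconnected_of_eventuallyEq
    ((hr t ht).2.mono inter_subset_left) ((hr t' ht').2.mono inter_subset_right)
    (((convex_ball _ _).inter (convex_ball _ _)).isPreconnected)
    ⟨h8, mem_ball_self (hr t' ht').1⟩ h9.symm

/-- Chain with uniform radius. -/
structure UChain (H : ℝ → ℂ) (ρ : ℝ) (F : ℝ → ℂ → ℂ) : Prop where
  pos : 0 < ρ
  an : ∀ s ∈ Icc (0:ℝ) 1, AnalyticOnNhd ℂ (F s) (ball (H s) ρ)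
  loc : ∀ s₀ ∈ Icc (0:ℝ) 1, ∀ᶠ s in 𝓝[Icc 0 1] s₀,
    EqOn (F s) (F s₀) (ball (H s) ρ ∩ ball (H s₀) ρ)

lemma UChain.mono {H : ℝ → ℂ} {ρ ρ' : ℝ} {F : ℝ → ℂ → ℂ} (h : UChain H ρ F) (h0 : 0 < ρ')
    (hρ : ρ' ≤ ρ) : UChain H ρ' F :=
  ⟨h0, fun s hs => (h.an s hs).mono (ball_subset_ball hρ), fun s hs => (h.loc s hs).mono
    fun _ h1 => h1.mono (inter_subset_inter (ball_subset_ball hρ) (ball_subset_ball hρ))⟩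

lemma GChain.uniform {H : ℝ → ℂ} {F : ℝ → ℂ → ℂ} (hH : ContinuousOn H (Icc 0 1))
    (hF : GChain H F) : ∃ ρ F', UChain H ρ F' ∧ ∀ s ∈ Icc (0:ℝ) 1, F' s =ᶠ[𝓝 (H s)] F s := by
  have h1 : ∃ ρ > 0, ∀ s ∈ Icc (0:ℝ) 1, ∃ φ : ℂ → ℂ, AnalyticOnNhd ℂ φ (ball (H s) ρ) ∧
      φ =ᶠ[𝓝 (H s)] F s := by
    refine (isCompact_Icc (a := (0:ℝ)) (b := 1)).induction_on
      (p := fun S => ∃ ρ > 0, ∀ s ∈ S, ∃ φ : ℂ → ℂ, AnalyticOnNhd ℂ φ (ball (H s) ρ) ∧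
      φ =ᶠ[𝓝 (H s)] F s) ⟨1, one_pos, by simp⟩ ?_ ?_ ?_
    · rintro s t hst ⟨ρ, hρ, h⟩
      exact ⟨ρ, hρ, fun x hx => h x (hst hx)⟩
    · rintro s t ⟨ρ, hρ, h⟩ ⟨ρ', hρ', h'⟩
      refine ⟨min ρ ρ', lt_min hρ hρ', ?_⟩
      rintro x (hx | hx)
      · obtain ⟨φ, h1, h2⟩ := h x hx
        exact ⟨φ, h1.mono (ball_subset_ball (min_le_left _ _)), h2⟩
      · obtain ⟨φ, h1, h2⟩ := h' x hx
        exact ⟨φ, h1.mono (ball_subset_ball (min_le_right _ _)), h2⟩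
    · intro s₀ hs₀
      obtain ⟨r, hr, h⟩ := (hF s₀ hs₀).1.exists_ball_analyticOnNhd
      have h6 := (hH s₀ hs₀).eventually (isOpen_ball.mem_nhds (mem_ball_self (half_pos hr)))
      refine ⟨_, h6.and (hF s₀ hs₀).2, r / 2, half_pos hr, ?_⟩
      rintro s ⟨hs1, hs2⟩
      refine ⟨F s₀, h.mono ?_, hs2.symm⟩
      apply ball_subset_ball'
      linarith
  obtain ⟨ρ, hρ, h1⟩ := h1
  have h2 : ∀ s, ∃ φ : ℂ → ℂ, s ∈ Icc (0:ℝ) 1 → AnalyticOnNhd ℂ φ (ball (H s) ρ) ∧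
      φ =ᶠ[𝓝 (H s)] F s := by
    intro s
    by_cases hs : s ∈ Icc (0:ℝ) 1
    · obtain ⟨φ, h⟩ := h1 s hs; exact ⟨φ, fun _ => h⟩
    · exact ⟨0, fun h => absurd h hs⟩
  choose F' hF' using h2
  refine ⟨ρ, F', ⟨hρ, fun s hs => (hF' s hs).1, ?_⟩, fun s hs => (hF' s hs).2⟩
  have hG := hF.congr hH (fun s hs => (hF' s hs).2)
  intro s₀ hs₀
  have h6 := (hH s₀ hs₀).eventually (isOpen_ball.mem_nhds (mem_ball_self hρ))
  filter_upwards [h6, (hG s₀ hs₀).2, self_mem_nhdsWithin] with s h6 h7 hs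
  exact AnalyticOnNhd.eqOn_of_preconnected_of_eventuallyEq
    ((hF' s hs).1.mono inter_subset_left) ((hF' s₀ hs₀).1.mono inter_subset_right)
    (((convex_ball _ _).inter (convex_ball _ _)).isPreconnected)
    ⟨mem_ball_self hρ, h6⟩ h7

/-- A uniform chain along `H` is a chain along each path close to `H`. -/
lemma UChain.near {H K : ℝ → ℂ} {ρ : ℝ} {F : ℝ → ℂ → ℂ} (h : UChain H ρ F)
    (hK : ContinuousOn K (Icc 0 1))
    (hHK : ∀ s ∈ Icc (0:ℝ) 1, K s ∈ ball (H s) ρ) : GChain K F := by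
  intro s₀ hs₀
  refine ⟨h.an s₀ hs₀ _ (hHK s₀ hs₀), ?_⟩
  have h1 := (hK s₀ hs₀).eventually (isOpen_ball.mem_nhds (hHK s₀ hs₀))
  filter_upwards [h1, h.loc s₀ hs₀, self_mem_nhdsWithin] with s h1 h2 hs
  exact h2.eventuallyEq_of_mem ((isOpen_ball.inter isOpen_ball).mem_nhds ⟨hHK s hs, h1⟩)

lemma GChain.continuousOn_val {K : ℝ → ℂ} {F : ℝ → ℂ → ℂ} (hF : GChain K F)
    (hK : ContinuousOn K (Icc 0 1)) : ContinuousOn (fun s => F s (K s)) (Icc 0 1) := by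
  intro s₀ hs₀
  have h1 : ContinuousWithinAt (fun s => F s₀ (K s)) (Icc 0 1) s₀ :=
    (hF s₀ hs₀).1.continuousAt.comp_continuousWithinAt (hK s₀ hs₀)
  refine h1.congr_of_eventuallyEq ?_ rfl
  filter_upwards [(hF s₀ hs₀).2] with s hs
  exact hs.eq_of_nhds
lemma UChain.integral_eq {H : ℝ → ℂ} {ρ : ℝ} {φ : ℝ → ℂ → ℂ} (h : UChain H ρ φ)
    {K₀ K₁ : ℝ → ℂ} (hK₀ : ContDiff ℝ 1 K₀) (hK₁ : ContDiff ℝ 1 K₁)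
    (h0 : K₀ 0 = K₁ 0) (h1 : K₀ 1 = K₁ 1)
    (hn₀ : ∀ s ∈ Icc (0:ℝ) 1, K₀ s ∈ ball (H s) ρ)
    (hn₁ : ∀ s ∈ Icc (0:ℝ) 1, K₁ s ∈ ball (H s) ρ) :
    ∫ s in (0:ℝ)..1, φ s (K₀ s) * deriv K₀ s = ∫ s in (0:ℝ)..1, φ s (K₁ s) * deriv K₁ s := by
  have hP : ∀ s, ∃ P : ℂ → ℂ, s ∈ Icc (0:ℝ) 1 → ∀ z ∈ ball (H s) ρ, HasDerivAt P (φ s z) z := by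
    intro s
    by_cases hs : s ∈ Icc (0:ℝ) 1
    · obtain ⟨P, hP⟩ := (h.an s hs).differentiableOn.isExactOn_ball
      exact ⟨P, fun _ => hP⟩
    · exact ⟨0, fun h => absurd h hs⟩
  choose P hP using hP
  have c0 : ∀ {K : ℝ → ℂ}, ContDiff ℝ 1 K → (∀ s ∈ Icc (0:ℝ) 1, K s ∈ ball (H s) ρ) →
      IntervalIntegrable (fun s => φ s (K s) * deriv K s) MeasureTheory.volume 0 1 := by
    intro K hK hn
    apply ContinuousOn.intervalIntegrable
    rw [uIcc_of_le zero_le_one]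
    exact ((h.near hK.continuous.continuousOn hn).continuousOn_val hK.continuous.continuousOn).mul
      (hK.continuous_deriv le_rfl).continuousOn
  set D : ℝ → ℂ := fun s => P s (K₁ s) - P s (K₀ s) with hD
  have hloc : ∀ s₀ ∈ Icc (0:ℝ) 1, ∀ᶠ s in 𝓝[Icc 0 1] s₀,
      D s = P s₀ (K₁ s) - P s₀ (K₀ s) := by
    intro s₀ hs₀
    have e0 := hK₀.continuous.continuousAt.continuousWithinAt (s := Icc (0:ℝ) 1) (x := s₀)
      |>.eventually (isOpen_ball.mem_nhds (hn₀ s₀ hs₀))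
    have e1 := hK₁.continuous.continuousAt.continuousWithinAt (s := Icc (0:ℝ) 1) (x := s₀)
      |>.eventually (isOpen_ball.mem_nhds (hn₁ s₀ hs₀))
    filter_upwards [e0, e1, h.loc s₀ hs₀, self_mem_nhdsWithin] with s e0 e1 e2 hs
    set U := ball (H s) ρ ∩ ball (H s₀) ρ
    have hU : Convex ℝ U := (convex_ball _ _).inter (convex_ball _ _)
    have hd : ∀ z ∈ U, HasDerivWithinAt (fun z => P s z - P s₀ z) 0 U z := by
      intro z hz
      have := ((hP s hs z hz.1).sub (hP s₀ hs₀ z hz.2)).hasDerivWithinAt (s := U)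
      rwa [e2 hz, sub_self] at this
    have := hU.is_const_of_fderivWithin_eq_zero (𝕜 := ℂ) (f := fun z => P s z - P s₀ z)
      (fun z hz => (hd z hz).differentiableWithinAt) (fun z hz => by
        have hu : UniqueDiffWithinAt ℂ U z :=
          (isOpen_ball.inter isOpen_ball).uniqueDiffWithinAt hz
        have h2 := (hd z hz).hasFDerivWithinAt.fderivWithin hu
        rw [h2]; ext; simp)
      (⟨hn₁ s hs, e1⟩ : K₁ s ∈ U) (⟨hn₀ s hs, e0⟩ : K₀ s ∈ U)
    simp only [hD]
    linear_combination this
  have hder : ∀ s₀ ∈ Icc (0:ℝ) 1, HasDerivAt (fun s => P s₀ (K₁ s) - P s₀ (K₀ s))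
      (φ s₀ (K₁ s₀) * deriv K₁ s₀ - φ s₀ (K₀ s₀) * deriv K₀ s₀) s₀ := by
    intro s₀ hs₀
    have d1 := (hK₁.differentiable one_ne_zero s₀).hasDerivAt
    have d0 := (hK₀.differentiable one_ne_zero s₀).hasDerivAt
    exact ((hP s₀ hs₀ _ (hn₁ s₀ hs₀)).comp s₀ d1).sub ((hP s₀ hs₀ _ (hn₀ s₀ hs₀)).comp s₀ d0)
  have hcont : ContinuousOn D (Icc 0 1) := by
    intro s₀ hs₀
    exact (hder s₀ hs₀).continuousAt.continuousWithinAt.congr_of_eventuallyEq (hloc s₀ hs₀) rfl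
  have hFTC := intervalIntegral.integral_eq_sub_of_hasDerivAt_of_le zero_le_one hcont
    (f' := fun s => φ s (K₁ s) * deriv K₁ s - φ s (K₀ s) * deriv K₀ s) ?_
    ((c0 hK₁ hn₁).sub (c0 hK₀ hn₀))
  · rw [intervalIntegral.integral_sub (c0 hK₁ hn₁) (c0 hK₀ hn₀)] at hFTC
    simp only [hD, h0, h1, sub_self] at hFTC
    exact (sub_eq_zero.1 hFTC).symm
  · intro s hs
    have hs' := Ioo_subset_Icc_self hs
    refine (hder s hs').congr_of_eventuallyEq ?_
    have := hloc s hs'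
    rwa [nhdsWithin_eq_nhds.2 (Icc_mem_nhds hs.1 hs.2)] at this

lemma differentiableOn_param {U : Set ℂ} (hU : IsOpen U) {Ψ : ℂ → ℝ → ℂ}
    (hc : ContinuousOn (fun p : ℂ × ℝ => Ψ p.1 p.2) (U ×ˢ Icc 0 1))
    (hd : ∀ s ∈ Icc (0:ℝ) 1, DifferentiableOn ℂ (fun z => Ψ z s) U) :
    DifferentiableOn ℂ (fun z => ∫ s in (0:ℝ)..1, Ψ z s) U := by
  intro z₀ hz₀
  obtain ⟨r, hr, hrU⟩ := Metric.isOpen_iff.1 hU z₀ hz₀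
  have hsub : closedBall z₀ (r / 2) ⊆ U :=
    (closedBall_subset_ball (by linarith)).trans hrU
  obtain ⟨C, hC⟩ := ((isCompact_closedBall z₀ (r/2)).prod (isCompact_Icc (a := (0:ℝ)) (b := 1))
    ).exists_bound_of_continuousOn (hc.mono (prod_mono hsub subset_rfl))
  have hsl : ∀ z ∈ U, ContinuousOn (Ψ z) (Icc 0 1) := by
    intro z hz
    exact hc.comp (f := fun s : ℝ => (z, s)) (by fun_prop) (fun s hs => ⟨hz, hs⟩)
  have hio : uIoc (0:ℝ) 1 ⊆ Icc 0 1 := by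
    rw [uIoc_of_le zero_le_one]; exact Ioc_subset_Icc_self
  have hmeas : ∀ z ∈ U, MeasureTheory.AEStronglyMeasurable (Ψ z)
      (MeasureTheory.volume.restrict (uIoc (0:ℝ) 1)) := fun z hz =>
    ((hsl z hz).mono hio).aestronglyMeasurable measurableSet_uIoc
  have hda : ∀ s ∈ Icc (0:ℝ) 1, ∀ z ∈ U,
      HasDerivAt (fun z => Ψ z s) (deriv (fun z => Ψ z s) z) z := fun s hs z hz =>
    ((hd s hs).differentiableAt (hU.mem_nhds hz)).hasDerivAt
  have key := intervalIntegral.hasDerivAt_integral_of_dominated_loc_of_deriv_le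
    (μ := MeasureTheory.volume) (a := 0) (b := 1) (F := Ψ)
    (F' := fun z s => deriv (fun z => Ψ z s) z) (x₀ := z₀) (s := ball z₀ (r/4))
    (bound := fun _ => C / (r / 4)) (ball_mem_nhds _ (by linarith)) ?_ ?_ ?_ ?_ ?_ ?_
  · exact key.2.differentiableAt.differentiableWithinAt
  · filter_upwards [hU.mem_nhds hz₀] with z hz using hmeas z hz
  · apply ContinuousOn.intervalIntegrable
    rw [uIcc_of_le zero_le_one]
    exact hsl z₀ hz₀
  · have hu : ∀ n : ℕ, z₀ + ((r / 2 / (n + 1) : ℝ) : ℂ) ∈ U := by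
      intro n
      apply hsub
      rw [mem_closedBall, dist_eq_norm, add_sub_cancel_left, Complex.norm_real,
        Real.norm_of_nonneg (by positivity)]
      apply div_le_self (by positivity)
      have : (0:ℝ) ≤ n := Nat.cast_nonneg n
      linarith
    refine aestronglyMeasurable_of_tendsto_ae atTop (f := fun (n : ℕ) s =>
      (((r / 2 / (n + 1) : ℝ) : ℂ))⁻¹ * (Ψ (z₀ + ((r / 2 / (n + 1) : ℝ) : ℂ)) s - Ψ z₀ s)) ?_ ?_
    · intro n
      exact ((hmeas _ (hu n)).sub (hmeas _ hz₀)).const_mul _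
    · rw [MeasureTheory.ae_restrict_iff' measurableSet_uIoc]
      refine Eventually.of_forall fun s hs => ?_
      have h1 := hasDerivAt_iff_tendsto_slope_zero.1 (hda s (hio hs) z₀ hz₀)
      have h2 : Tendsto (fun n : ℕ => ((r / 2 / (n + 1) : ℝ) : ℂ)) atTop (𝓝[≠] 0) := by
        rw [tendsto_nhdsWithin_iff]
        constructor
        · rw [← Complex.ofReal_zero]
          apply (Complex.continuous_ofReal.tendsto 0).comp
          have := (tendsto_one_div_add_atTop_nhds_zero_nat (𝕜 := ℝ)).const_mul (r / 2)
          simpa [div_eq_mul_inv] using this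
        · refine Eventually.of_forall fun n => ?_
          simp only [mem_compl_iff, mem_singleton_iff, Complex.ofReal_eq_zero]
          positivity
      have := h1.comp h2
      simpa [Function.comp_def, smul_eq_mul] using this
  · refine Eventually.of_forall fun s hs z hz => ?_
    have hb : closedBall z (r/4) ⊆ closedBall z₀ (r/2) := by
      apply closedBall_subset_closedBall'
      rw [mem_ball] at hz; linarith
    apply Complex.norm_deriv_le_of_forall_mem_sphere_norm_le (by linarith)
    · apply DifferentiableOn.diffContOnCl
      rw [closure_ball _ (by linarith)]
      exact (hd s (hio hs)).mono (hb.trans hsub)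
    · intro w hw
      exact hC (w, s) ⟨hb (sphere_subset_closedBall hw), hio hs⟩
  · exact intervalIntegrable_const
  · refine Eventually.of_forall fun s hs z hz => hda s (hio hs) z (hrU ?_)
    exact ball_subset_ball (by linarith) hz
lemma tendsto_one_sub_Icc {s₀ : ℝ} :
    Tendsto (fun s : ℝ => 1 - s) (𝓝[Icc 0 1] s₀) (𝓝[Icc 0 1] (1 - s₀)) := by
  rw [tendsto_nhdsWithin_iff]
  constructor
  · exact (by fun_prop : Continuous fun s : ℝ => 1 - s).continuousAt.continuousWithinAt
  · filter_upwards [self_mem_nhdsWithin] with s hs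
    exact ⟨by linarith [hs.2], by linarith [hs.1]⟩

lemma one_sub_mem {s : ℝ} (hs : s ∈ Icc (0:ℝ) 1) : 1 - s ∈ Icc (0:ℝ) 1 :=
  ⟨by linarith [hs.2], by linarith [hs.1]⟩

lemma UChain.joint {X : Type*} [TopologicalSpace X] {S : Set X} {H : ℝ → ℂ} {ρ : ℝ}
    {F : ℝ → ℂ → ℂ} (h : UChain H ρ F) {k : X → ℂ} {σ : X → ℝ} (hk : ContinuousOn k S)
    (hσ : ContinuousOn σ S) (hm : ∀ x ∈ S, σ x ∈ Icc (0:ℝ) 1)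
    (hb : ∀ x ∈ S, k x ∈ ball (H (σ x)) ρ) : ContinuousOn (fun x => F (σ x) (k x)) S := by
  intro x₀ hx₀
  have h1 : ContinuousWithinAt (fun x => F (σ x₀) (k x)) S x₀ :=
    (h.an _ (hm x₀ hx₀) _ (hb x₀ hx₀)).continuousAt.comp_continuousWithinAt (hk x₀ hx₀)
  refine h1.congr_of_eventuallyEq ?_ rfl
  have h2 : Tendsto σ (𝓝[S] x₀) (𝓝[Icc 0 1] (σ x₀)) := by
    rw [tendsto_nhdsWithin_iff]
    refine ⟨hσ x₀ hx₀, ?_⟩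
    filter_upwards [self_mem_nhdsWithin] with x hx using hm x hx
  have h3 := (hk x₀ hx₀).eventually (isOpen_ball.mem_nhds (hb x₀ hx₀))
  filter_upwards [h2.eventually (h.loc _ (hm x₀ hx₀)), h3, self_mem_nhdsWithin] with x h2 h3 hx
  exact h2 ⟨hb x hx, h3⟩

lemma UChain.prod {H : ℝ → ℂ} {ρ : ℝ} {F G : ℝ → ℂ → ℂ} (hF : UChain H ρ F)
    (hG : UChain H ρ G) (hsym : ∀ s, H s + H (1 - s) = H 1) {ζ : ℂ} (hζ : ‖ζ - H 1‖ < ρ / 2) :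
    UChain H (ρ / 2) (fun s ξ => F s ξ * G (1 - s) (ζ - ξ)) := by
  have hm : ∀ s, ∀ ξ ∈ ball (H s) (ρ / 2), ζ - ξ ∈ ball (H (1 - s)) ρ := by
    intro s ξ hξ
    rw [mem_ball, dist_eq_norm] at *
    have : ζ - ξ - H (1 - s) = (ζ - H 1) - (ξ - H s) := by rw [← hsym s]; ring
    rw [this]
    calc _ ≤ ‖ζ - H 1‖ + ‖ξ - H s‖ := norm_sub_le _ _
      _ < ρ := by linarith
  have hle : ρ / 2 ≤ ρ := by linarith [hF.pos]
  refine ⟨half_pos hF.pos, ?_, ?_⟩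
  · intro s hs ξ hξ
    apply (hF.an s hs ξ (ball_subset_ball hle hξ)).mul
    exact (hG.an (1 - s) (one_sub_mem hs) _ (hm s ξ hξ)).comp
      (f := fun ξ => ζ - ξ) (analyticAt_const.sub analyticAt_id)
  · intro s₀ hs₀
    filter_upwards [hF.loc s₀ hs₀, tendsto_one_sub_Icc.eventually (hG.loc _ (one_sub_mem hs₀))]
      with s h1 h2 ξ hξ
    simp only
    rw [h1 ⟨ball_subset_ball hle hξ.1, ball_subset_ball hle hξ.2⟩,
      h2 ⟨hm s ξ hξ.1, hm s₀ ξ hξ.2⟩]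

/-- The contour `H` linearly deformed so as to end at `ζ`. -/
def Kd (H : ℝ → ℂ) (ζ : ℂ) (s : ℝ) : ℂ := H s + (ζ - H 1) * s

/-- Convolution integral along the deformed contour. -/
def Ih (H : ℝ → ℂ) (F G : ℝ → ℂ → ℂ) (ζ : ℂ) : ℂ :=
  ∫ s in (0:ℝ)..1, F s (Kd H ζ s) * G (1 - s) (ζ - Kd H ζ s) * deriv (Kd H ζ) s

lemma contDiff_Kd {H : ℝ → ℂ} (hH : ContDiff ℝ 1 H) (ζ : ℂ) : ContDiff ℝ 1 (Kd H ζ) := by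
  unfold Kd
  exact hH.add (contDiff_const.mul Complex.ofRealCLM.contDiff)

lemma deriv_Kd {H : ℝ → ℂ} (hH : ContDiff ℝ 1 H) (ζ : ℂ) (s : ℝ) :
    deriv (Kd H ζ) s = deriv H s + (ζ - H 1) := by
  have h1 := (hH.differentiable one_ne_zero s).hasDerivAt
  have h2 : HasDerivAt (fun s : ℝ => (ζ - H 1) * (s : ℂ)) ((ζ - H 1) * 1) s :=
    (Complex.ofRealCLM.hasDerivAt (x := s)).const_mul _
  rw [mul_one] at h2
  exact (h1.add h2).deriv

lemma Kd_dist {H : ℝ → ℂ} {ζ : ℂ} {s : ℝ} (hs : s ∈ Icc (0:ℝ) 1) :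
    ‖Kd H ζ s - H s‖ ≤ ‖ζ - H 1‖ := by
  have : Kd H ζ s - H s = (ζ - H 1) * s := by unfold Kd; ring
  rw [this, norm_mul, Complex.norm_real, Real.norm_of_nonneg hs.1]
  exact mul_le_of_le_one_right (norm_nonneg _) hs.2

lemma Kd_dist' {H : ℝ → ℂ} (hsym : ∀ s, H s + H (1 - s) = H 1) {ζ : ℂ} {s : ℝ}
    (hs : s ∈ Icc (0:ℝ) 1) : ‖ζ - Kd H ζ s - H (1 - s)‖ ≤ ‖ζ - H 1‖ := by
  have : ζ - Kd H ζ s - H (1 - s) = Kd H ζ (1 - s) - H (1 - s) := by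
    unfold Kd; push_cast; linear_combination (-1 : ℂ) * hsym s
  rw [this]; exact Kd_dist (one_sub_mem hs)

lemma Ih_analytic {H : ℝ → ℂ} {ρ : ℝ} {F G : ℝ → ℂ → ℂ} (hH : ContDiff ℝ 1 H)
    (hF : UChain H ρ F)
    (hG : UChain H ρ G) (hsym : ∀ s, H s + H (1 - s) = H 1) :
    AnalyticAt ℂ (Ih H F G) (H 1) := by
  have hρ := hF.pos
  have hmem : H 1 ∈ ball (H 1) ρ := mem_ball_self hρ
  refine DifferentiableOn.analyticAt (s := ball (H 1) ρ) ?_ (isOpen_ball.mem_nhds hmem)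
  have hb1 : ∀ x : ℂ × ℝ, x ∈ ball (H 1) ρ ×ˢ Icc (0:ℝ) 1 → Kd H x.1 x.2 ∈ ball (H x.2) ρ := by
    rintro ⟨ζ, s⟩ ⟨hζ, hs⟩
    rw [mem_ball, dist_eq_norm] at *
    exact (Kd_dist hs).trans_lt hζ
  have hb2 : ∀ x : ℂ × ℝ, x ∈ ball (H 1) ρ ×ˢ Icc (0:ℝ) 1 →
      x.1 - Kd H x.1 x.2 ∈ ball (H (1 - x.2)) ρ := by
    rintro ⟨ζ, s⟩ ⟨hζ, hs⟩
    rw [mem_ball, dist_eq_norm] at *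
    exact (Kd_dist' hsym hs).trans_lt hζ
  have hHc := hH.continuous
  have hH'c := hH.continuous_deriv le_rfl
  have hKc : Continuous (fun x : ℂ × ℝ => Kd H x.1 x.2) := by unfold Kd; fun_prop
  refine differentiableOn_param isOpen_ball ?_ ?_
  · refine ContinuousOn.mul (ContinuousOn.mul ?_ ?_) ?_
    · exact hF.joint hKc.continuousOn (by fun_prop) (fun x hx => hx.2) hb1
    · exact hG.joint (k := fun x : ℂ × ℝ => x.1 - Kd H x.1 x.2) (σ := fun x => 1 - x.2)
        (by fun_prop) (by fun_prop) (fun x hx => one_sub_mem hx.2) hb2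
    · simp only [deriv_Kd hH]
      fun_prop
  · intro s hs ζ hζ
    apply DifferentiableAt.differentiableWithinAt
    simp only [deriv_Kd hH]
    have dK : DifferentiableAt ℂ (fun ζ => Kd H ζ s) ζ := by unfold Kd; fun_prop
    have d1 : DifferentiableAt ℂ (fun ζ => F s (Kd H ζ s)) ζ :=
      (hF.an s hs _ (hb1 (ζ, s) ⟨hζ, hs⟩)).differentiableAt.comp ζ dK
    have d2 : DifferentiableAt ℂ (fun ζ => G (1 - s) (ζ - Kd H ζ s)) ζ :=
      (hG.an _ (one_sub_mem hs) _ (hb2 (ζ, s) ⟨hζ, hs⟩)).differentiableAt.comp ζ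
        (differentiableAt_id.sub dK)
    exact (d1.mul d2).mul (by fun_prop)

lemma UChain.eqOn_near {H H' : ℝ → ℂ} {ρ ρ' : ℝ} {F F' : ℝ → ℂ → ℂ} (hF : UChain H ρ F)
    (hF' : UChain H' ρ' F') (hH' : ContinuousOn H' (Icc 0 1))
    (hn : ∀ s ∈ Icc (0:ℝ) 1, H' s ∈ ball (H s) ρ) (h0 : F' 0 =ᶠ[𝓝 (H' 0)] F 0) :
    ∀ s ∈ Icc (0:ℝ) 1, EqOn (F' s) (F s) (ball (H' s) ρ' ∩ ball (H s) ρ) := by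
  intro s hs
  have h := GChain.unique hH' (hF'.near hH' fun s _ => mem_ball_self hF'.pos) (hF.near hH' hn)
    h0 s hs
  exact AnalyticOnNhd.eqOn_of_preconnected_of_eventuallyEq
    ((hF'.an s hs).mono inter_subset_left) ((hF.an s hs).mono inter_subset_right)
    (((convex_ball _ _).inter (convex_ball _ _)).isPreconnected)
    ⟨mem_ball_self hF'.pos, hn s hs⟩ h

lemma Ih_compat {H H' : ℝ → ℂ} {ρ ρ' : ℝ} {F G F' G' : ℝ → ℂ → ℂ}
    (hH : ContDiff ℝ 1 H) (hH' : ContDiff ℝ 1 H')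
    (hF : UChain H ρ F) (hG : UChain H ρ G) (hF' : UChain H' ρ' F') (hG' : UChain H' ρ' G')
    (hsym : ∀ s, H s + H (1 - s) = H 1) (hsym' : ∀ s, H' s + H' (1 - s) = H' 1)
    (h0 : H' 0 = H 0) (hF0 : F' 0 =ᶠ[𝓝 (H' 0)] F 0) (hG0 : G' 0 =ᶠ[𝓝 (H' 0)] G 0)
    (hn : ∀ s ∈ Icc (0:ℝ) 1, ‖H' s - H s‖ < ρ / 4) :
    Ih H' F' G' =ᶠ[𝓝 (H' 1)] Ih H F G := by
  have hρ := hF.pos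
  have hρ' := hF'.pos
  have hpos : 0 < min ρ' (ρ / 4) := lt_min hρ' (by linarith)
  have hHc' : ContinuousOn H' (Icc 0 1) := hH'.continuous.continuousOn
  have hn' : ∀ s ∈ Icc (0:ℝ) 1, H' s ∈ ball (H s) ρ := by
    intro s hs
    rw [mem_ball, dist_eq_norm]; linarith [hn s hs]
  have eF := hF.eqOn_near hF' hHc' hn' hF0
  have eG := hG.eqOn_near hG' hHc' hn' hG0
  filter_upwards [ball_mem_nhds (H' 1) hpos] with ζ hζ
  rw [mem_ball, dist_eq_norm, lt_min_iff] at hζ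
  have hζ1 : ‖ζ - H 1‖ < ρ / 2 := by
    have := hn 1 (by simp)
    calc ‖ζ - H 1‖ = ‖(ζ - H' 1) + (H' 1 - H 1)‖ := by congr 1; ring
      _ ≤ ‖ζ - H' 1‖ + ‖H' 1 - H 1‖ := norm_add_le _ _
      _ < ρ / 2 := by linarith
  have hK' : ∀ s ∈ Icc (0:ℝ) 1, ‖Kd H' ζ s - H s‖ < ρ / 2 := by
    intro s hs
    calc ‖Kd H' ζ s - H s‖ = ‖(Kd H' ζ s - H' s) + (H' s - H s)‖ := by congr 1; ring
      _ ≤ ‖Kd H' ζ s - H' s‖ + ‖H' s - H s‖ := norm_add_le _ _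
      _ < ρ / 2 := by linarith [hn s hs, Kd_dist (H := H') (ζ := ζ) hs]
  have step1 : Ih H' F' G' ζ =
      ∫ s in (0:ℝ)..1, F s (Kd H' ζ s) * G (1 - s) (ζ - Kd H' ζ s) * deriv (Kd H' ζ) s := by
    unfold Ih
    apply intervalIntegral.integral_congr
    intro s hs
    rw [uIcc_of_le zero_le_one] at hs
    have hs' := one_sub_mem hs
    simp only
    rw [eF s hs (x := Kd H' ζ s) ⟨?_, ?_⟩, eG (1 - s) hs' (x := ζ - Kd H' ζ s) ⟨?_, ?_⟩]
    · rw [mem_ball, dist_eq_norm]; linarith [Kd_dist' hsym' (ζ := ζ) hs]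
    · rw [mem_ball, dist_eq_norm]
      calc ‖ζ - Kd H' ζ s - H (1 - s)‖
          = ‖(ζ - Kd H' ζ s - H' (1 - s)) + (H' (1 - s) - H (1 - s))‖ := by congr 1; ring
        _ ≤ ‖ζ - Kd H' ζ s - H' (1 - s)‖ + ‖H' (1 - s) - H (1 - s)‖ := norm_add_le _ _
        _ < ρ := by linarith [hn (1 - s) hs', Kd_dist' hsym' (ζ := ζ) hs]
    · rw [mem_ball, dist_eq_norm]; linarith [Kd_dist (H := H') (ζ := ζ) hs]
    · rw [mem_ball, dist_eq_norm]; linarith [hK' s hs]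
  rw [step1]
  unfold Ih
  refine UChain.integral_eq (hF.prod hG hsym hζ1) (contDiff_Kd hH' ζ) (contDiff_Kd hH ζ) ?_ ?_ ?_ ?_
  · simp [Kd, h0]
  · simp [Kd]
  · intro s hs; rw [mem_ball, dist_eq_norm]; exact hK' s hs
  · intro s hs; rw [mem_ball, dist_eq_norm]; exact (Kd_dist hs).trans_lt hζ1
lemma infDist_add_le {Ω : Set ℂ} (hne : Ω.Nonempty) (hcl : IsClosed Ω)
    (hadd : ∀ ω₁ ∈ Ω, ∀ ω₂ ∈ Ω, ω₁ + ω₂ ∈ Ω) (a b : ℂ) :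
    infDist (a + b) Ω ≤ infDist a Ω + infDist b Ω := by
  obtain ⟨x, hx, hx'⟩ := hcl.exists_infDist_eq_dist hne a
  obtain ⟨y, hy, hy'⟩ := hcl.exists_infDist_eq_dist hne b
  rw [hx', hy']
  exact (infDist_le_dist_of_mem (hadd x hx y hy)).trans (dist_add_add_le _ _ _ _)

lemma exists_weight {Ω : Set ℂ} (hne : Ω.Nonempty) (hcl : IsClosed Ω)
    (hadd : ∀ ω₁ ∈ Ω, ∀ ω₂ ∈ Ω, ω₁ + ω₂ ∈ Ω) {H : ℝ → ℂ} (hH : Continuous H)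
    (hsym : ∀ s, H s + H (1 - s) = H 1) {δ : ℝ} (hδ : 0 < δ) (hd : 2 * δ < infDist (H 1) Ω) :
    ∃ l : ℝ → ℝ, ContDiff ℝ 1 l ∧ (∀ s, l s + l (1 - s) = 1) ∧ (∀ s, l s ∈ Icc (0:ℝ) 1) ∧
      (∃ ε > 0, ∀ s ∈ Icc (0:ℝ) ε, l s = 0) ∧
      (∀ s ∈ Icc (0:ℝ) 1, infDist (H s) Ω ≤ δ → l s = 0) := by
  have hc : Continuous (fun s => infDist (H s) Ω) := (continuous_infDist_pt Ω).comp hH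
  have hev : ∀ᶠ s in 𝓝 (0:ℝ), δ < infDist (H (1 - s)) Ω := by
    have : Continuous (fun s : ℝ => infDist (H (1 - s)) Ω) := hc.comp (by fun_prop)
    refine this.continuousAt.eventually (lt_mem_nhds ?_)
    simp only [sub_zero]; linarith
  obtain ⟨e, he, hev⟩ := Metric.eventually_nhds_iff.1 hev
  set ε := min (e / 2) (1 / 4) with hε
  have hε0 : 0 < ε := lt_min (by linarith) (by norm_num)
  have hε1 : ε < 1 / 2 := (min_le_right _ _).trans_lt (by norm_num)
  have hfar : ∀ s ∈ Icc (0:ℝ) ε, δ < infDist (H (1 - s)) Ω := by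
    intro s hs
    apply hev
    rw [Real.dist_eq, sub_zero, abs_of_nonneg hs.1]
    have := min_le_left (e / 2) (1 / 4)
    linarith [hs.2]
  set A : Set ℝ := (Icc 0 1 ∩ {s | infDist (H s) Ω ≤ δ}) ∪ Icc 0 ε with hA
  have hAc : IsClosed A :=
    (isClosed_Icc.inter (isClosed_le hc continuous_const)).union isClosed_Icc
  set B : Set ℝ := (fun s => 1 - s) ⁻¹' A with hB
  have hBc : IsClosed B := hAc.preimage (by fun_prop)
  have hdis : Disjoint A B := by
    rw [Set.disjoint_left]
    rintro s (⟨h1, h2⟩ | h1) (⟨h3, h4⟩ | h3)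
    · have := infDist_add_le hne hcl hadd (H s) (H (1 - s))
      rw [hsym] at this
      simp only [mem_ofPred_eq] at h2 h4
      linarith
    · have := hfar _ h3
      simp only [sub_sub_cancel] at this
      simp only [mem_ofPred_eq] at h2
      linarith
    · have := hfar _ h1
      simp only [mem_ofPred_eq] at h4
      linarith
    · have a1 := h1.2
      have a2 := h3.2
      linarith
  obtain ⟨m, hm1, hm2, hm3⟩ := exists_contMDiffMap_zero_one_of_isClosed (n := 1)
    (modelWithCornersSelf ℝ ℝ) hAc hBc hdis
  have hmc : ContDiff ℝ 1 m := m.contMDiff.contDiff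
  have hz : ∀ s ∈ A, (m s + (1 - m (1 - s))) / 2 = 0 := by
    intro s hs
    have e1 : m s = 0 := hm1 hs
    have e2 : m (1 - s) = 1 := hm2 (by simpa [hB] using hs)
    rw [e1, e2]; norm_num
  refine ⟨fun s => (m s + (1 - m (1 - s))) / 2, ?_, ?_, ?_, ⟨ε, hε0, ?_⟩, ?_⟩
  · have : ContDiff ℝ 1 (fun s : ℝ => m (1 - s)) := hmc.comp (contDiff_const.sub contDiff_id)
    exact (hmc.add (contDiff_const.sub this)).div_const 2
  · intro s; simp only [sub_sub_cancel]; ring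
  · intro s
    have h1 := hm3 s
    have h2 := hm3 (1 - s)
    constructor
    · linarith [h1.1, h2.2]
    · linarith [h1.2, h2.1]
  · intro s hs; exact hz s (Or.inr hs)
  · intro s hs hs'; exact hz s (Or.inl ⟨hs, hs'⟩)

/-- An `Ω`-avoiding symmetric homotopy of contours over the path `γ`. -/
structure Good (Ω : Set ℂ) (z : ℂ) (γ : ℝ → ℂ) (H : ℝ → ℝ → ℂ) : Prop where
  smooth : ∀ t ∈ Icc (0:ℝ) 1, ContDiff ℝ 1 (H t)
  sym : ∀ t ∈ Icc (0:ℝ) 1, ∀ s, H t s + H t (1 - s) = H t 1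
  fin : ∀ t ∈ Icc (0:ℝ) 1, H t 1 = γ t
  avoid : ∀ t ∈ Icc (0:ℝ) 1, ∀ s ∈ Ioc (0:ℝ) 1, H t s ∉ Ω
  start : ∀ t ∈ Icc (0:ℝ) 1, ∃ ε > 0, ∀ s ∈ Icc (0:ℝ) ε, H t s = s * z
  cont : ∀ t₀ ∈ Icc (0:ℝ) 1, ∀ η > 0, ∀ᶠ t in 𝓝[Icc 0 1] t₀, ∀ s ∈ Icc (0:ℝ) 1,
    ‖H t s - H t₀ s‖ < η
  init : ∀ s, H 0 s = s * z

lemma exists_good {Ω : Set ℂ} (hne : Ω.Nonempty) (hcl : IsClosed Ω)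
    (hadd : ∀ ω₁ ∈ Ω, ∀ ω₂ ∈ Ω, ω₁ + ω₂ ∈ Ω) {γ : ℝ → ℂ} (hγ : ContinuousOn γ (Icc 0 1))
    (hav : ∀ t ∈ Icc (0:ℝ) 1, γ t ∉ Ω) (h0 : ∀ s ∈ Ioc (0:ℝ) 1, (s:ℂ) * γ 0 ∉ Ω) :
    ∃ H, Good Ω (γ 0) γ H := by
  obtain ⟨δ, hδ, hδγ⟩ : ∃ δ > 0, ∀ t ∈ Icc (0:ℝ) 1, 2 * δ < infDist (γ t) Ω := by
    obtain ⟨t₁, ht₁, hmin⟩ := (isCompact_Icc (a := (0:ℝ)) (b := 1)).exists_isMinOn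
      (nonempty_Icc.2 zero_le_one) ((continuous_infDist_pt Ω).comp_continuousOn hγ)
    have hp : 0 < infDist (γ t₁) Ω := (hcl.notMem_iff_infDist_pos hne).1 (hav t₁ ht₁)
    refine ⟨infDist (γ t₁) Ω / 3, by linarith, fun t ht => ?_⟩
    have : infDist (γ t₁) Ω ≤ infDist (γ t) Ω := hmin ht
    linarith
  obtain ⟨τ, hτ, hτγ⟩ : ∃ τ > 0, ∀ t ∈ Icc (0:ℝ) 1, ∀ t' ∈ Icc (0:ℝ) 1, |t - t'| ≤ τ →
      ‖γ t - γ t'‖ < δ := by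
    have hu := isCompact_Icc.uniformContinuousOn_of_continuous hγ
    obtain ⟨e, he, h⟩ := Metric.uniformContinuousOn_iff.1 hu δ hδ
    refine ⟨e / 2, by linarith, fun t ht t' ht' htt => ?_⟩
    rw [← dist_eq_norm]
    apply h t ht t' ht'
    rw [Real.dist_eq]; linarith
  have key : ∀ k : ℕ, ∃ H, Good Ω (γ 0) (fun t => γ (min t (min 1 (k * τ)))) H ∧
      ∀ t ∈ Icc (0:ℝ) 1, min 1 (k * τ) ≤ t → H t = H (min 1 (k * τ)) := by
    intro k
    induction k with
    | zero =>
      refine ⟨fun _ s => s * γ 0, ⟨?_, ?_, ?_, ?_, ?_, ?_, ?_⟩, ?_⟩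
      · intro _ _; exact Complex.ofRealCLM.contDiff.mul contDiff_const
      · intro _ _ s; push_cast; ring
      · intro t ht; simp [ht.1]
      · intro _ _ s hs; exact h0 s hs
      · intro _ _; exact ⟨1, one_pos, fun _ _ => rfl⟩
      · intro t₀ _ η hη
        exact Eventually.of_forall fun t s _ => by simpa using hη
      · intro s; rfl
      · intro _ _ _; rfl
    | succ k ih =>
      obtain ⟨H, hH, hst⟩ := ih
      set T := min 1 ((k:ℝ) * τ) with hT
      set T' := min 1 (((k + 1 : ℕ):ℝ) * τ) with hT'
      have hk0 : 0 ≤ (k:ℝ) * τ := by positivity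
      have hTm : T ∈ Icc (0:ℝ) 1 := ⟨le_min zero_le_one hk0, min_le_left _ _⟩
      have hsucc : ((k + 1 : ℕ):ℝ) * τ = k * τ + τ := by push_cast; ring
      have hTT' : T ≤ T' := by
        rw [hT, hT', hsucc]; exact min_le_min le_rfl (by linarith)
      have hTm' : T' ∈ Icc (0:ℝ) 1 := ⟨hTm.1.trans hTT', min_le_left _ _⟩
      have hT'τ : T' ≤ T + τ := by
        rw [hT, hT', hsucc]
        rcases le_total 1 (k * τ) with h | h
        · rw [min_eq_left h]; exact (min_le_left _ _).trans (by linarith)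
        · rw [min_eq_right h]; exact min_le_right _ _
      set d : ℝ → ℂ := fun t => γ (min t T') - γ (min t T) with hd
      have hmin : ∀ {t x : ℝ}, t ∈ Icc (0:ℝ) 1 → x ∈ Icc (0:ℝ) 1 → min t x ∈ Icc (0:ℝ) 1 :=
        fun ht hx => ⟨le_min ht.1 hx.1, (min_le_left _ _).trans ht.2⟩
      have hdδ : ∀ t ∈ Icc (0:ℝ) 1, ‖d t‖ < δ := by
        intro t ht
        refine hτγ _ (hmin ht hTm') _ (hmin ht hTm) ?_
        rw [abs_le]
        constructor
        · linarith [min_le_min (le_refl t) hTT']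
        · rcases le_total t T with h | h
          · rw [min_eq_left h, min_eq_left (h.trans hTT')]; linarith
          · rw [min_eq_right h]; linarith [min_le_right t T']
      have hd0 : ∀ t, t ≤ T → d t = 0 := by
        intro t ht
        simp only [hd, min_eq_left ht, min_eq_left (ht.trans hTT'), sub_self]
      have hdc : ContinuousOn d (Icc 0 1) := by
        apply ContinuousOn.sub
        · exact hγ.comp (by fun_prop) (fun t ht => hmin ht hTm')
        · exact hγ.comp (by fun_prop) (fun t ht => hmin ht hTm)
      obtain ⟨l, l1, l2, l3, ⟨ε₁, hε₁, l4⟩, l5⟩ := exists_weight hne hcl hadd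
        (hH.smooth T hTm).continuous (hH.sym T hTm) hδ
        (by rw [hH.fin T hTm]; simpa using hδγ T hTm)
      have hl0 : l 0 = 0 := l4 0 ⟨le_rfl, hε₁.le⟩
      have hl1 : l 1 = 1 := by have := l2 0; rw [hl0] at this; simpa using this
      refine ⟨fun t s => H t s + d t * l s, ⟨?_, ?_, ?_, ?_, ?_, ?_, ?_⟩, ?_⟩
      · intro t ht
        exact (hH.smooth t ht).add (contDiff_const.mul (Complex.ofRealCLM.contDiff.comp l1))
      · intro t ht s
        have e1 := hH.sym t ht s
        have e2 : ((l s : ℂ)) + l (1 - s) = 1 := by exact_mod_cast l2 s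
        rw [hl1]
        push_cast
        linear_combination e1 + d t * e2
      · intro t ht
        simp only [hl1, hH.fin t ht, hd]
        push_cast; ring
      · intro t ht s hs
        rcases le_total t T with h | h
        · simp only [hd0 t h, zero_mul, add_zero]; exact hH.avoid t ht s hs
        · simp only [hst t ht h]
          by_cases hc : infDist (H T s) Ω ≤ δ
          · rw [l5 s ⟨hs.1.le, hs.2⟩ hc]
            simpa using hH.avoid T hTm s hs
          · intro hmem
            apply hc
            refine (infDist_le_dist_of_mem hmem).trans ?_
            rw [dist_eq_norm]
            have : H T s - (H T s + d t * l s) = -(d t * l s) := by ring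
            rw [this, norm_neg, norm_mul, Complex.norm_real, Real.norm_of_nonneg (l3 s).1]
            exact (mul_le_of_le_one_right (norm_nonneg _) (l3 s).2).trans (hdδ t ht).le
      · intro t ht
        obtain ⟨ε, hε, h⟩ := hH.start t ht
        refine ⟨min ε ε₁, lt_min hε hε₁, fun s hs => ?_⟩
        rw [h s ⟨hs.1, hs.2.trans (min_le_left _ _)⟩, l4 s ⟨hs.1, hs.2.trans (min_le_right _ _)⟩]
        simp
      · intro t₀ ht₀ η hη
        have c1 := hH.cont t₀ ht₀ (η / 2) (by linarith)
        have c2 := (hdc t₀ ht₀).eventually (ball_mem_nhds _ (half_pos hη))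
        filter_upwards [c1, c2] with t c1 c2 s hs
        have c2 : ‖d t - d t₀‖ < η / 2 := by rwa [← dist_eq_norm]
        have : H t s + d t * l s - (H t₀ s + d t₀ * l s) = (H t s - H t₀ s) + (d t - d t₀) * l s := by
          ring
        rw [this]
        refine (norm_add_le _ _).trans_lt ?_
        rw [norm_mul, Complex.norm_real, Real.norm_of_nonneg (l3 s).1]
        have := mul_le_of_le_one_right (norm_nonneg (d t - d t₀)) (l3 s).2
        linarith [c1 s hs]
      · intro s
        simp only [hd0 0 hTm.1, zero_mul, add_zero]
        exact hH.init s
      · intro t ht htT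
        funext s
        have e1 : d t = d T' := by simp only [hd, min_eq_right htT, min_eq_right (hTT'.trans htT),
          min_self, min_eq_right hTT']
        simp only [e1, hst t ht (hTT'.trans htT), hst T' hTm' hTT']
  obtain ⟨k, hk⟩ := exists_nat_ge (1 / τ)
  obtain ⟨H, hH, -⟩ := key k
  have h1 : min 1 ((k:ℝ) * τ) = 1 := min_eq_left (by rwa [div_le_iff₀ hτ] at hk)
  refine ⟨H, ⟨hH.smooth, hH.sym, fun t ht => ?_, hH.avoid, hH.start, hH.cont, hH.init⟩⟩
  rw [hH.fin t ht, h1, min_eq_left ht.2]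
lemma chain_exists {Ω : Set ℂ} {f : ℂ → ℂ} {R : ℝ} (hf : AnalyticOnNhd ℂ f (ball 0 R))
    (hcont : ∀ γ : ℝ → ℂ, PiecewiseC1On γ 0 1 → γ 0 ∈ ball (0:ℂ) R → γ 0 ≠ 0 →
      (∀ t ∈ Icc (0:ℝ) 1, γ t ∉ Ω) → ContinuableAlong f γ 0 1)
    {H : ℝ → ℂ} (hH : ContDiff ℝ 1 H) (hav : ∀ s ∈ Ioc (0:ℝ) 1, H s ∉ Ω) {z : ℂ}
    (hz : z ∈ ball (0:ℂ) R) (hz0 : z ≠ 0) {ε : ℝ} (hε : 0 < ε)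
    (hst : ∀ s ∈ Icc (0:ℝ) ε, H s = s * z) :
    ∃ F, GChain H F ∧ F 0 =ᶠ[𝓝 (H 0)] f := by
  set e := min ε (1/2) with he
  have he0 : 0 < e := lt_min hε (by norm_num)
  have he1 : e ≤ 1 / 2 := min_le_right _ _
  have h1e : 0 < 1 - e := by linarith
  have hste : ∀ s ∈ Icc (0:ℝ) e, H s = s * z := fun s hs =>
    hst s ⟨hs.1, hs.2.trans (min_le_left _ _)⟩
  have hin : ∀ s ∈ Icc (0:ℝ) e, H s ∈ ball (0:ℂ) R := by
    intro s hs
    rw [hste s hs]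
    rw [mem_ball_zero_iff] at *
    rw [norm_mul, Complex.norm_real, Real.norm_of_nonneg hs.1]
    exact (mul_le_of_le_one_left (norm_nonneg _) (by linarith [hs.2])).trans_lt hz
  set p : ℝ → ℂ := fun τ => H (e + τ * (1 - e)) with hp
  have hpc : ContDiff ℝ 1 p := hH.comp (contDiff_const.add (contDiff_id.mul contDiff_const))
  have hp0 : p 0 = H e := by simp [hp]
  obtain ⟨g₁, hg₁⟩ := hcont p ⟨hpc.continuous.continuousOn, 1, fun i => i, by simp, by simp,
      by simp, fun i _ => hpc.contDiffOn⟩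
    (by rw [hp0]; exact hin e ⟨he0.le, le_rfl⟩)
    (by rw [hp0, hste e ⟨he0.le, le_rfl⟩]
        exact mul_ne_zero (by exact_mod_cast he0.ne') hz0)
    (fun t ht => hav _ ⟨by have := mul_nonneg ht.1 h1e.le; linarith, by nlinarith [ht.2]⟩)
  obtain ⟨G, hG, hG0⟩ := gchain_of_contAlong hpc.continuous.continuousOn hg₁
  rw [hp0] at hG0
  set τ : ℝ → ℝ := fun s => (max s e - e) / (1 - e) with hτ
  have hτc : Continuous τ := by simp only [hτ]; fun_prop
  have hτm : ∀ s ∈ Icc (0:ℝ) 1, τ s ∈ Icc (0:ℝ) 1 := by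
    intro s hs
    refine ⟨div_nonneg (by linarith [le_max_right s e]) h1e.le, ?_⟩
    rw [div_le_one h1e]
    linarith [max_le hs.2 (by linarith : e ≤ 1)]
  have hpτ : ∀ s, e ≤ s → p (τ s) = H s := by
    intro s hs
    simp only [hp, hτ, max_eq_left hs]
    congr 1
    field_simp
    ring
  have hτe : τ e = 0 := by simp [hτ]
  refine ⟨fun s => if s < e then f else G (τ s), ?_, ?_⟩
  · intro s₀ hs₀
    rcases lt_or_ge s₀ e with h | h
    · simp only [if_pos h]
      refine ⟨hf _ (hin s₀ ⟨hs₀.1, h.le⟩), ?_⟩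
      filter_upwards [nhdsWithin_le_nhds (Iio_mem_nhds h)] with s hs
      rw [if_pos (mem_Iio.1 hs)]
    · simp only [if_neg h.not_gt]
      have hch := hG (τ s₀) (hτm s₀ hs₀)
      rw [hpτ s₀ h] at hch
      refine ⟨hch.1, ?_⟩
      have ht : Tendsto τ (𝓝[Icc 0 1] s₀) (𝓝[Icc 0 1] (τ s₀)) := by
        rw [tendsto_nhdsWithin_iff]
        refine ⟨hτc.continuousAt.continuousWithinAt, ?_⟩
        filter_upwards [self_mem_nhdsWithin] with s hs using hτm s hs
      have hlow : ∀ᶠ s in 𝓝[Icc 0 1] s₀, s < e → f =ᶠ[𝓝 (H s)] G (τ s₀) := by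
        rcases h.lt_or_eq with h | h
        · filter_upwards [nhdsWithin_le_nhds (Ioi_mem_nhds h)] with s hs hs'
          exact absurd hs' (not_lt.2 (le_of_lt hs))
        · rw [← h, hτe]
          have := hH.continuous.continuousAt.eventually (eventually_eventually_nhds.2 hG0)
          filter_upwards [nhdsWithin_le_nhds this] with s hs _
          exact EventuallyEq.symm hs
      filter_upwards [ht.eventually hch.2, hlow] with s h1 h2
      by_cases hs : s < e
      · rw [if_pos (mem_Iio.1 hs)]; exact h2 hs
      · rw [if_neg hs]
        rwa [hpτ s (not_lt.1 hs)] at h1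
  · simp only [if_pos he0]; rfl

lemma conv_analytic {f g : ℂ → ℂ} {R : ℝ} (hf : AnalyticOnNhd ℂ f (ball 0 R))
    (hg : AnalyticOnNhd ℂ g (ball 0 R)) : AnalyticOnNhd ℂ (conv f g) (ball 0 R) := by
  apply DifferentiableOn.analyticOnNhd _ isOpen_ball
  unfold conv
  have hm : ∀ (s : ℝ), s ∈ Icc (0:ℝ) 1 → ∀ ζ ∈ ball (0:ℂ) R, (s:ℂ) * ζ ∈ ball (0:ℂ) R := by
    intro s hs ζ hζ
    rw [mem_ball_zero_iff] at *
    rw [norm_mul, Complex.norm_real, Real.norm_of_nonneg hs.1]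
    exact (mul_le_of_le_one_left (norm_nonneg _) hs.2).trans_lt hζ
  have hm' : ∀ (s : ℝ), s ∈ Icc (0:ℝ) 1 → ∀ ζ ∈ ball (0:ℂ) R, (1 - (s:ℂ)) * ζ ∈ ball (0:ℂ) R := by
    intro s hs ζ hζ
    have := hm (1 - s) (one_sub_mem hs) ζ hζ
    push_cast at this; exact this
  refine differentiableOn_id.mul (differentiableOn_param isOpen_ball ?_ ?_)
  · apply ContinuousOn.mul
    · exact hf.continuousOn.comp (f := fun p : ℂ × ℝ => (p.2 : ℂ) * p.1) (by fun_prop)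
        (fun p hp => hm _ hp.2 _ hp.1)
    · exact hg.continuousOn.comp (f := fun p : ℂ × ℝ => (1 - (p.2 : ℂ)) * p.1) (by fun_prop)
        (fun p hp => hm' _ hp.2 _ hp.1)
  · intro s hs
    apply DifferentiableOn.mul
    · exact hf.differentiableOn.comp (f := fun ζ : ℂ => (s : ℂ) * ζ) (by fun_prop)
        (fun ζ hζ => hm _ hs _ hζ)
    · exact hg.differentiableOn.comp (f := fun ζ : ℂ => (1 - (s : ℂ)) * ζ) (by fun_prop)
        (fun ζ hζ => hm' _ hs _ hζ)

theorem sufficiency {Ω : Set ℂ} (hne : Ω.Nonempty) (hcl : IsClosed Ω)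
    (hadd : ∀ ω₁ ∈ Ω, ∀ ω₂ ∈ Ω, ω₁ + ω₂ ∈ Ω) (f g : ℂ → ℂ) (hf : OmegaCont Ω f)
    (hg : OmegaCont Ω g) : OmegaCont Ω (conv f g) := by
  obtain ⟨R₁, hR₁, hf1, hf2, hf3⟩ := hf
  obtain ⟨R₂, hR₂, hg1, hg2, hg3⟩ := hg
  have hl : ball (0:ℂ) (min R₁ R₂) ⊆ ball 0 R₁ := ball_subset_ball (min_le_left _ _)
  have hr : ball (0:ℂ) (min R₁ R₂) ⊆ ball 0 R₂ := ball_subset_ball (min_le_right _ _)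
  refine ⟨min R₁ R₂, lt_min hR₁ hR₂, conv_analytic (hf1.mono hl) (hg1.mono hr),
    fun ζ hζ => hf2 ζ (hl hζ), ?_⟩
  intro γ hγ hγ0 hγne hav
  have hγc : ContinuousOn γ (Icc 0 1) := hγ.1
  obtain ⟨H, hH⟩ := exists_good hne hcl hadd hγc hav (by
    intro s hs
    apply hf2
    · apply hl
      rw [mem_ball_zero_iff] at *
      rw [norm_mul, Complex.norm_real, Real.norm_of_nonneg hs.1.le]
      exact (mul_le_of_le_one_left (norm_nonneg _) hs.2).trans_lt hγ0
    · exact mul_ne_zero (by exact_mod_cast hs.1.ne') hγne)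
  have hH0 : ∀ t ∈ Icc (0:ℝ) 1, H t 0 = 0 := by
    intro t ht
    obtain ⟨ε, hε, h⟩ := hH.start t ht
    rw [h 0 ⟨le_rfl, hε.le⟩]; simp
  have hdata : ∀ t, ∃ (ρ : ℝ) (F G : ℝ → ℂ → ℂ), t ∈ Icc (0:ℝ) 1 →
      UChain (H t) ρ F ∧ UChain (H t) ρ G ∧ F 0 =ᶠ[𝓝 0] f ∧ G 0 =ᶠ[𝓝 0] g := by
    intro t
    by_cases ht : t ∈ Icc (0:ℝ) 1
    · have hc := hH.smooth t ht
      obtain ⟨ε, hε, hs⟩ := hH.start t ht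
      have z0 : (0:ℝ) ∈ Icc (0:ℝ) 1 := by simp
      obtain ⟨F, hF, hF0⟩ := chain_exists hf1 hf3 hc (hH.avoid t ht) (hl hγ0) hγne hε hs
      obtain ⟨G, hG, hG0⟩ := chain_exists hg1 hg3 hc (hH.avoid t ht) (hr hγ0) hγne hε hs
      obtain ⟨ρ, F', hF', hFF'⟩ := hF.uniform hc.continuous.continuousOn
      obtain ⟨ρ', G', hG', hGG'⟩ := hG.uniform hc.continuous.continuousOn
      have hpos := lt_min hF'.pos hG'.pos
      refine ⟨min ρ ρ', F', G', fun _ => ⟨hF'.mono hpos (min_le_left _ _),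
        hG'.mono hpos (min_le_right _ _), ?_, ?_⟩⟩
      · have := (hFF' 0 z0).trans hF0
        rwa [hH0 t ht] at this
      · have := (hGG' 0 z0).trans hG0
        rwa [hH0 t ht] at this
    · exact ⟨0, fun _ => 0, fun _ => 0, fun h => absurd h ht⟩
  choose ρ F G hD using hdata
  refine contAlong_of_gchain hγc (F := fun t => Ih (H t) (F t) (G t)) ?_ ?_
  · intro t₀ ht₀
    obtain ⟨d1, d2, d3, d4⟩ := hD t₀ ht₀
    constructor
    · rw [← hH.fin t₀ ht₀]
      exact Ih_analytic (hH.smooth t₀ ht₀) d1 d2 (hH.sym t₀ ht₀)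
    · filter_upwards [hH.cont t₀ ht₀ (ρ t₀ / 4) (by linarith [d1.pos]), self_mem_nhdsWithin]
        with t hn ht
      obtain ⟨e1, e2, e3, e4⟩ := hD t ht
      rw [← hH.fin t ht]
      refine Ih_compat (hH.smooth t₀ ht₀) (hH.smooth t ht) d1 d2 e1 e2 (hH.sym t₀ ht₀)
        (hH.sym t ht) ?_ ?_ ?_ hn
      · rw [hH0 t ht, hH0 t₀ ht₀]
      · rw [hH0 t ht]; exact e3.trans d3.symm
      · rw [hH0 t ht]; exact e4.trans d4.symm
  · have z0 : (0:ℝ) ∈ Icc (0:ℝ) 1 := by simp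
    obtain ⟨d1, d2, d3, d4⟩ := hD 0 z0
    have hconst : ∀ {φ : ℂ → ℂ}, AnalyticOnNhd ℂ φ (ball 0 (min R₁ R₂)) →
        UChain (H 0) (min R₁ R₂ - ‖γ 0‖) (fun _ => φ) := by
      intro φ hφ
      refine ⟨by rw [mem_ball_zero_iff] at hγ0; linarith, fun s hs => hφ.mono ?_,
        fun s _ => Eventually.of_forall fun _ _ _ => rfl⟩
      apply ball_subset_ball'
      rw [hH.init s, dist_zero_right, norm_mul, Complex.norm_real, Real.norm_of_nonneg hs.1]
      linarith [mul_le_of_le_one_left (norm_nonneg (γ 0)) hs.2]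
    have hc := Ih_compat (hH.smooth 0 z0) (hH.smooth 0 z0) (hconst (hf1.mono hl))
      (hconst (hg1.mono hr)) d1 d2 (hH.sym 0 z0) (hH.sym 0 z0) rfl
      (by rw [hH0 0 z0]; exact d3) (by rw [hH0 0 z0]; exact d4)
      (by
        intro s _
        have := (hconst (hf1.mono hl)).pos
        simp only [sub_self, norm_zero]; linarith)
    rw [hH.fin 0 z0] at hc
    refine hc.trans (Eventually.of_forall fun ζ => ?_)
    unfold Ih conv
    rw [← intervalIntegral.integral_const_mul]
    apply intervalIntegral.integral_congr
    intro s _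
    have hK : Kd (H 0) ζ = fun s : ℝ => (s:ℂ) * ζ := by
      funext s
      simp only [Kd, hH.init]
      push_cast; ring
    have hK' : deriv (Kd (H 0) ζ) s = ζ := by
      rw [hK]
      have := (Complex.ofRealCLM.hasDerivAt (x := s)).mul_const ζ
      simpa using this.deriv
    simp only [hK']
    rw [hK]
    simp only
    rw [show ζ - (s:ℂ) * ζ = (1 - (s:ℂ)) * ζ by ring]
    ring

lemma isolated {Ω : Set ℂ} (hcl : IsClosed Ω) (hdisc : DiscreteTopology Ω) (c : ℂ) :
    ∃ r > 0, ∀ z ∈ ball c r, z ≠ c → z ∉ Ω := by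
  by_cases hc : c ∈ Ω
  · obtain ⟨r, hr, h⟩ := exists_ball_inter_eq_singleton_of_mem_discrete
      (isDiscrete_iff_discreteTopology.2 hdisc) hc
    refine ⟨r, hr, fun z hz hzc hzΩ => hzc ?_⟩
    have : z ∈ ball c r ∩ Ω := ⟨hz, hzΩ⟩
    rw [h] at this
    exact this
  · obtain ⟨r, hr, h⟩ := Metric.isOpen_iff.1 hcl.isOpen_compl c hc
    exact ⟨r, hr, fun z hz _ => h hz⟩

lemma omegaCont_inv {Ω : Set ℂ} (hcl : IsClosed Ω) (hdisc : DiscreteTopology Ω) {w : ℂ}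
    (hw : w ∈ Ω) (hw0 : w ≠ 0) : OmegaCont Ω (fun z => (z - w)⁻¹) := by
  obtain ⟨R, hR, h⟩ := isolated hcl hdisc 0
  refine ⟨R, hR, ?_, h, ?_⟩
  · intro z hz
    have : z ≠ w := by
      rintro rfl
      exact h z hz hw0 hw
    exact (analyticAt_id.sub analyticAt_const).inv (sub_ne_zero.2 this)
  · intro γ hγ _ _ hav
    refine contAlong_of_gchain (F := fun _ z => (z - w)⁻¹) hγ.1 ?_ EventuallyEq.rfl
    intro t ht
    refine ⟨?_, Eventually.of_forall fun _ => EventuallyEq.rfl⟩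
    have : γ t ≠ w := by
      intro hh
      exact hav t ht (hh ▸ hw)
    exact (analyticAt_id.sub analyticAt_const).inv (sub_ne_zero.2 this)

lemma seg_integral_log {z w : ℂ} (h : ‖z‖ < ‖w‖) :
    (∀ t ∈ Icc (0:ℝ) 1, (t : ℂ) * z - w ≠ 0) ∧
    ∫ t in (0:ℝ)..1, z * ((t : ℂ) * z - w)⁻¹ = Complex.log (1 - z / w) := by
  have hw : w ≠ 0 := by
    rintro rfl
    simp at h
    exact absurd h (not_lt.2 (norm_nonneg _))
  have h1 : ∀ t ∈ Icc (0:ℝ) 1, ‖(t : ℂ) * z‖ < ‖w‖ := by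
    intro t ht
    rw [norm_mul, Complex.norm_real, Real.norm_of_nonneg ht.1]
    exact (mul_le_of_le_one_left (norm_nonneg _) ht.2).trans_lt h
  have h2 : ∀ t ∈ Icc (0:ℝ) 1, (t : ℂ) * z - w ≠ 0 := by
    intro t ht h0
    have := h1 t ht
    rw [sub_eq_zero.1 h0] at this
    exact lt_irrefl _ this
  refine ⟨h2, ?_⟩
  have h3 : ∀ t ∈ Icc (0:ℝ) 1, 1 - (t : ℂ) * z / w ∈ Complex.slitPlane := by
    intro t ht
    rw [sub_eq_add_neg]
    apply Complex.mem_slitPlane_of_norm_lt_one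
    rw [norm_neg, norm_div]
    exact (div_lt_one (norm_pos_iff.2 hw)).2 (h1 t ht)
  have := integral_eq_sub_of_hasDerivAt (a := 0) (b := 1)
    (f := fun t : ℝ => Complex.log (1 - (t : ℂ) * z / w))
    (f' := fun t : ℝ => z * ((t : ℂ) * z - w)⁻¹) ?_ ?_
  · rw [this]; simp
  · intro t ht
    rw [uIcc_of_le zero_le_one] at ht
    have hd : HasDerivAt (fun t : ℝ => 1 - (t : ℂ) * z / w) (- (1 * z / w)) t :=
      ((Complex.ofRealCLM.hasDerivAt (x := t)).mul_const z |>.div_const w).const_sub 1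
    refine (hd.clog_real (h3 t ht)).congr_deriv ?_
    have h5 := h2 t ht
    have h6 : w - (t : ℂ) * z ≠ 0 := by
      intro h0; apply h5; rw [← neg_sub, h0, neg_zero]
    have h7 : 1 - (t : ℂ) * z / w = - ((t : ℂ) * z - w) / w := by
      field_simp
      ring
    rw [h7]
    generalize (t : ℂ) * z - w = x at h5
    field_simp
  · apply ContinuousOn.intervalIntegrable
    rw [uIcc_of_le zero_le_one]
    exact continuousOn_const.mul (ContinuousOn.inv₀ (by fun_prop) h2)

lemma conv_log {z w₁ w₂ : ℂ} (h₁ : ‖z‖ < ‖w₁‖) (h₂ : ‖z‖ < ‖w₂‖) :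
    (z - (w₁ + w₂)) * conv (fun z => (z - w₁)⁻¹) (fun z => (z - w₂)⁻¹) z =
      Complex.log (1 - z / w₁) + Complex.log (1 - z / w₂) := by
  obtain ⟨a1, a2⟩ := seg_integral_log h₁
  obtain ⟨b1, b2⟩ := seg_integral_log h₂
  have b3 : ∫ t in (0:ℝ)..1, z * ((1 - (t : ℂ)) * z - w₂)⁻¹ = Complex.log (1 - z / w₂) := by
    rw [← b2]
    have := intervalIntegral.integral_comp_sub_left (a := 0) (b := 1)
      (fun t : ℝ => z * ((t : ℂ) * z - w₂)⁻¹) 1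
    simpa using this
  have b4 : ∀ t ∈ Icc (0:ℝ) 1, (1 - (t : ℂ)) * z - w₂ ≠ 0 := by
    intro t ht
    have := b1 (1 - t) ⟨by linarith [ht.2], by linarith [ht.1]⟩
    simpa using this
  rw [← a2, ← b3, ← intervalIntegral.integral_add]
  · unfold conv
    rw [← mul_assoc, ← intervalIntegral.integral_const_mul]
    apply intervalIntegral.integral_congr
    intro t ht
    rw [uIcc_of_le zero_le_one] at ht
    have c1 := a1 t ht
    have c2 := b4 t ht
    have c3 : z - (w₁ + w₂) = ((t : ℂ) * z - w₁) + ((1 - (t : ℂ)) * z - w₂) := by ring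
    simp only [c3]
    generalize (t : ℂ) * z - w₁ = x at c1
    generalize (1 - (t : ℂ)) * z - w₂ = y at c2
    field_simp
    ring
  · apply ContinuousOn.intervalIntegrable
    rw [uIcc_of_le zero_le_one]
    exact continuousOn_const.mul (ContinuousOn.inv₀ (by fun_prop) a1)
  · apply ContinuousOn.intervalIntegrable
    rw [uIcc_of_le zero_le_one]
    exact continuousOn_const.mul (ContinuousOn.inv₀ (by fun_prop) b4)

lemma hasDerivAt_log {z w : ℂ} (h : ‖z‖ < ‖w‖) :
    HasDerivAt (fun z => Complex.log (1 - z / w)) (z - w)⁻¹ z := by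
  have hw : w ≠ 0 := by
    rintro rfl
    simp at h
    exact absurd h (not_lt.2 (norm_nonneg _))
  have h3 : 1 - z / w ∈ Complex.slitPlane := by
    rw [sub_eq_add_neg]
    apply Complex.mem_slitPlane_of_norm_lt_one
    rw [norm_neg, norm_div]
    exact (div_lt_one (norm_pos_iff.2 hw)).2 h
  have hd : HasDerivAt (fun z : ℂ => 1 - z / w) (- (1 / w)) z :=
    ((hasDerivAt_id z).div_const w).const_sub 1
  convert hd.clog h3 using 1
  have h5 : z - w ≠ 0 := by
    intro h0; rw [sub_eq_zero.1 h0] at h; exact lt_irrefl _ h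
  have h6 : w - z ≠ 0 := by
    intro h0; apply h5; rw [← neg_sub, h0, neg_zero]
  have h7 : 1 - z / w ≠ 0 := Complex.slitPlane_ne_zero h3
  field_simp
  ring

lemma deriv_conv_log {p w₁ w₂ : ℂ} (h₁ : ‖p‖ < ‖w₁‖) (h₂ : ‖p‖ < ‖w₂‖) :
    deriv (fun z => (z - (w₁ + w₂)) * conv (fun z => (z - w₁)⁻¹) (fun z => (z - w₂)⁻¹) z)
      =ᶠ[𝓝 p] fun z => (z - w₁)⁻¹ + (z - w₂)⁻¹ := by
  have e1 : ∀ᶠ z : ℂ in 𝓝 p, ‖z‖ < ‖w₁‖ ∧ ‖z‖ < ‖w₂‖ :=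
    (continuous_norm.continuousAt.eventually (Iio_mem_nhds h₁)).and
      (continuous_norm.continuousAt.eventually (Iio_mem_nhds h₂))
  have e2 : (fun z => (z - (w₁ + w₂)) * conv (fun z => (z - w₁)⁻¹) (fun z => (z - w₂)⁻¹) z)
      =ᶠ[𝓝 p] fun z => Complex.log (1 - z / w₁) + Complex.log (1 - z / w₂) := by
    filter_upwards [e1] with z hz
    exact conv_log hz.1 hz.2
  refine e2.deriv.trans ?_
  filter_upwards [e1] with z hz
  exact ((hasDerivAt_log hz.1).add (hasDerivAt_log hz.2)).deriv

/-- Fundamental theorem of calculus along one third of a path. -/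
lemma ftc_piece {γ : ℝ → ℂ} {G : ℝ → ℂ → ℂ} {φ : ℂ → ℂ} (hG : GChain γ G)
    (hd : ∀ t ∈ Icc (0:ℝ) 1, deriv (G t) (γ t) = φ (γ t))
    (hφ : ∀ t ∈ Icc (0:ℝ) 1, ContinuousAt φ (γ t)) {σ : ℝ → ℂ} (hσ : ContDiff ℝ 1 σ)
    (a : ℝ) (ha : 0 ≤ a) (ha' : a ≤ 2) (hγ : ∀ t ∈ Icc (0:ℝ) 1, γ ((a + t) / 3) = σ t) :
    ∫ t in (0:ℝ)..1, deriv σ t * φ (σ t) =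
      G ((a + 1) / 3) (σ 1) - G ((a + 0) / 3) (σ 0) := by
  have hm : ∀ t ∈ Icc (0:ℝ) 1, (a + t) / 3 ∈ Icc (0:ℝ) 1 := by
    intro t ht
    constructor
    · have := ht.1; positivity
    · have := ht.2; linarith
  have hmm : MapsTo (fun t : ℝ => (a + t) / 3) (Icc 0 1) (Icc 0 1) := hm
  have hloc : ∀ t₀ ∈ Icc (0:ℝ) 1, ∀ᶠ t in 𝓝[Icc 0 1] t₀,
      G ((a + t) / 3) (σ t) = G ((a + t₀) / 3) (σ t) := by
    intro t₀ ht₀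
    have hc : ContinuousWithinAt (fun t : ℝ => (a + t) / 3) (Icc 0 1) t₀ := by fun_prop
    have := (hc.tendsto_nhdsWithin hmm).eventually (hG _ (hm t₀ ht₀)).2
    filter_upwards [this, self_mem_nhdsWithin] with t h1 h2
    have := h1.eq_of_nhds
    rwa [hγ t h2] at this
  refine integral_eq_sub_of_hasDerivAt_of_le zero_le_one
    (f := fun t => G ((a + t) / 3) (σ t)) ?_ ?_ ?_
  · intro t₀ ht₀
    have han := (hG _ (hm t₀ ht₀)).1
    rw [hγ t₀ ht₀] at han
    have h1 : ContinuousWithinAt (fun t => G ((a + t₀) / 3) (σ t)) (Icc 0 1) t₀ :=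
      han.continuousAt.comp_continuousWithinAt hσ.continuous.continuousWithinAt
    exact h1.congr_of_eventuallyEq (hloc t₀ ht₀) rfl
  · intro t₀ ht₀
    have ht := Ioo_subset_Icc_self ht₀
    have han := (hG _ (hm t₀ ht)).1
    have hdd := hd _ (hm t₀ ht)
    rw [hγ t₀ ht] at han hdd
    have h1 := han.differentiableAt.hasDerivAt
    rw [hdd] at h1
    have h2 : HasDerivAt σ (deriv σ t₀) t₀ := (hσ.differentiable (by norm_num) t₀).hasDerivAt
    have h3 := h1.scomp t₀ h2
    have h4 := hloc t₀ ht
    rw [nhdsWithin_eq_nhds.2 (Icc_mem_nhds ht₀.1 ht₀.2)] at h4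
    exact h3.congr_of_eventuallyEq h4
  · apply ContinuousOn.intervalIntegrable
    rw [uIcc_of_le zero_le_one]
    refine (hσ.continuous_deriv (by norm_num)).continuousOn.mul ?_
    intro t ht
    have := hφ _ (hm t ht)
    rw [hγ t ht] at this
    exact this.comp_continuousWithinAt hσ.continuous.continuousWithinAt

/-- Concatenation of three paths. -/
def cat3 (A C B : ℝ → ℂ) (t : ℝ) : ℂ :=
  if t ≤ 1 / 3 then A (3 * t) else if t ≤ 2 / 3 then C (3 * t - 1) else B (3 * t - 2)

lemma cat3_A {A C B : ℝ → ℂ} {t : ℝ} (ht : t ∈ Icc (0:ℝ) 1) :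
    cat3 A C B ((0 + t) / 3) = A t := by
  unfold cat3
  rw [if_pos (by linarith [ht.2])]
  congr 1; ring

lemma cat3_C {A C B : ℝ → ℂ} (h : A 1 = C 0) {t : ℝ} (ht : t ∈ Icc (0:ℝ) 1) :
    cat3 A C B ((1 + t) / 3) = C t := by
  unfold cat3
  rcases ht.1.eq_or_lt with h0 | h0
  · subst h0
    rw [if_pos (by norm_num), ← h]
    congr 1; norm_num
  · rw [if_neg (by linarith), if_pos (by linarith [ht.2])]
    congr 1; ring

lemma cat3_B {A C B : ℝ → ℂ} (h : C 1 = B 0) {t : ℝ} (ht : t ∈ Icc (0:ℝ) 1) :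
    cat3 A C B ((2 + t) / 3) = B t := by
  unfold cat3
  rcases ht.1.eq_or_lt with h0 | h0
  · subst h0
    rw [if_neg (by norm_num), if_pos (by norm_num), ← h]
    congr 1; norm_num
  · rw [if_neg (by linarith), if_neg (by linarith)]
    congr 1; ring

lemma cat3_continuous {A C B : ℝ → ℂ} (hA : Continuous A) (hC : Continuous C) (hB : Continuous B)
    (h1 : A 1 = C 0) (h2 : C 1 = B 0) : Continuous (cat3 A C B) := by
  unfold cat3
  refine Continuous.if_le (by fun_prop) (Continuous.if_le (by fun_prop) (by fun_prop)
    continuous_id continuous_const ?_) continuous_id continuous_const ?_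
  · intro x hx
    subst hx
    norm_num [h2]
  · intro x hx
    subst hx
    norm_num [h1]

lemma cat3_piecewise {A C B : ℝ → ℂ} (hA : ContDiff ℝ 1 A) (hC : ContDiff ℝ 1 C)
    (hB : ContDiff ℝ 1 B) (h1 : A 1 = C 0) (h2 : C 1 = B 0) :
    PiecewiseC1On (cat3 A C B) 0 1 := by
  refine ⟨(cat3_continuous hA.continuous hC.continuous hB.continuous h1 h2).continuousOn,
    3, fun i => (i : ℝ) / 3, by simp, by norm_num, ?_, ?_⟩
  · intro i _
    push_cast
    linarith
  · intro i hi
    interval_cases i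
    · have : ContDiff ℝ 1 (fun t : ℝ => A (3 * t)) := hA.comp (by fun_prop)
      refine this.contDiffOn.congr ?_
      intro t ht
      have ht1 := ht.1
      have ht2 := ht.2
      norm_num at ht1 ht2
      have := cat3_A (A := A) (C := C) (B := B) (t := 3 * t) ⟨by linarith, by linarith⟩
      rw [← this]; congr 1; ring
    · have : ContDiff ℝ 1 (fun t : ℝ => C (3 * t - 1)) := hC.comp (by fun_prop)
      refine this.contDiffOn.congr ?_
      intro t ht
      have ht1 := ht.1
      have ht2 := ht.2
      norm_num at ht1 ht2
      have := cat3_C (A := A) (C := C) (B := B) h1 (t := 3 * t - 1) ⟨by linarith, by linarith⟩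
      rw [← this]; congr 1; ring
    · have : ContDiff ℝ 1 (fun t : ℝ => B (3 * t - 2)) := hB.comp (by fun_prop)
      refine this.contDiffOn.congr ?_
      intro t ht
      have ht1 := ht.1
      have ht2 := ht.2
      norm_num at ht1 ht2
      have := cat3_B (A := A) (C := C) (B := B) h2 (t := 3 * t - 2) ⟨by linarith, by linarith⟩
      rw [← this]; congr 1; ring

lemma cat3_avoid {Ω : Set ℂ} {A C B : ℝ → ℂ} (hA : ∀ t ∈ Icc (0:ℝ) 1, A t ∉ Ω)
    (hC : ∀ t ∈ Icc (0:ℝ) 1, C t ∉ Ω) (hB : ∀ t ∈ Icc (0:ℝ) 1, B t ∉ Ω) :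
    ∀ t ∈ Icc (0:ℝ) 1, cat3 A C B t ∉ Ω := by
  intro t ht
  unfold cat3
  split_ifs with h1 h2
  · exact hA _ ⟨by linarith [ht.1], by linarith⟩
  · exact hC _ ⟨by linarith, by linarith⟩
  · exact hB _ ⟨by linarith, by linarith [ht.2]⟩

/-- Smooth paths avoiding a countable set. -/
lemma exists_avoid {Ω : Set ℂ} (hΩ : Ω.Countable) {a b : ℂ} (ha : a ∉ Ω) (hb : b ∉ Ω) :
    ∃ σ : ℝ → ℂ, ContDiff ℝ 1 σ ∧ σ 0 = a ∧ σ 1 = b ∧ ∀ t ∈ Icc (0:ℝ) 1, σ t ∉ Ω := by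
  by_cases hab : a = b
  · subst hab
    exact ⟨fun _ => a, contDiff_const, rfl, rfl, fun _ _ => ha⟩
  have hba : b - a ≠ 0 := sub_ne_zero.2 (Ne.symm hab)
  let bad : ℂ → ℝ := fun w => ((w - a) / (b - a)).im /
    (((w - a) / (b - a)).re * (1 - ((w - a) / (b - a)).re))
  have hcount : (bad '' Ω).Countable := hΩ.image bad
  obtain ⟨s, hs⟩ : ∃ s, s ∉ bad '' Ω := by
    by_contra! hcon
    have : (univ : Set ℝ).Countable := hcount.mono fun x _ => hcon x
    exact Cardinal.not_countable_real this
  have hofr : ContDiff ℝ 1 (fun t : ℝ => (t : ℂ)) := Complex.ofRealCLM.contDiff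
  refine ⟨fun t => a + ((t : ℂ) + (s * (t * (1 - t)) : ℝ) * Complex.I) * (b - a), ?_, by simp,
    by simp, ?_⟩
  · have : ContDiff ℝ 1 (fun t : ℝ => ((s * (t * (1 - t)) : ℝ) : ℂ)) :=
      Complex.ofRealCLM.contDiff.comp
        (contDiff_const.mul (contDiff_id.mul (contDiff_const.sub contDiff_id)))
    exact contDiff_const.add ((hofr.add (this.mul contDiff_const)).mul contDiff_const)
  · intro t ht hmem
    rcases ht.1.eq_or_lt with h0 | h0
    · subst h0
      apply ha; simpa using hmem
    rcases ht.2.eq_or_lt with h1 | h1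
    · subst h1
      apply hb; simpa using hmem
    apply hs
    refine ⟨_, hmem, ?_⟩
    have h3 : 1 - t ≠ 0 := by linarith
    have h4 : t ≠ 0 := h0.ne'
    have h5 : ((t : ℂ) + (s * (t * (1 - t)) : ℝ) * Complex.I).re = t := by
      simp [-Complex.ofReal_mul, -Complex.ofReal_sub]
    have h6 : ((t : ℂ) + (s * (t * (1 - t)) : ℝ) * Complex.I).im = s * (t * (1 - t)) := by
      simp [-Complex.ofReal_mul, -Complex.ofReal_sub]
    simp only [bad, add_sub_cancel_left, mul_div_cancel_right₀ _ hba]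
    rw [h5, h6]
    field_simp

/-- The value of the integral around the loop. -/
lemma loop_integral {w₁ w₂ : ℂ} {r : ℝ} (hr : 0 < r) (h : w₂ = w₁ ∨ w₂ ∉ closedBall w₁ r) :
    ∫ t in (0:ℝ)..1, deriv (fun t : ℝ => circleMap w₁ r (2 * Real.pi * t)) t *
      ((circleMap w₁ r (2 * Real.pi * t) - w₁)⁻¹ + (circleMap w₁ r (2 * Real.pi * t) - w₂)⁻¹)
      ≠ 0 := by
  have key : (∮ z in C(w₁, r), ((z - w₁)⁻¹ + (z - w₂)⁻¹)) ≠ 0 := by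
    have e1 : (∮ z in C(w₁, r), (z - w₁)⁻¹) = 2 * Real.pi * Complex.I :=
      circleIntegral.integral_sub_center_inv w₁ hr.ne'
    have hne : (2 * Real.pi * Complex.I : ℂ) ≠ 0 := Complex.two_pi_I_ne_zero
    have hi1 : CircleIntegrable (fun z => (z - w₁)⁻¹) w₁ r := by
      apply ContinuousOn.circleIntegrable hr.le
      refine ContinuousOn.inv₀ (by fun_prop) ?_
      intro z hz
      exact sub_ne_zero.2 (ne_of_mem_sphere hz hr.ne')
    rcases h with h | h
    · subst h
      rw [circleIntegral.integral_add hi1 hi1, e1]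
      rw [← two_mul]
      exact mul_ne_zero two_ne_zero hne
    · have hcl : ∀ z ∈ closedBall w₁ r, z - w₂ ≠ 0 := by
        intro z hz h0
        rw [sub_eq_zero.1 h0] at hz
        exact h hz
      have hi2 : CircleIntegrable (fun z => (z - w₂)⁻¹) w₁ r := by
        apply ContinuousOn.circleIntegrable hr.le
        exact ContinuousOn.inv₀ (by fun_prop) fun z hz => hcl z (sphere_subset_closedBall hz)
      rw [circleIntegral.integral_add hi1 hi2, e1]
      rw [Complex.circleIntegral_eq_zero_of_differentiable_on_off_countable hr.le
        countable_empty (f := fun z => (z - w₂)⁻¹), add_zero]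
      · exact hne
      · exact ContinuousOn.inv₀ (by fun_prop) hcl
      · intro z hz
        exact (differentiableAt_id.sub_const _).inv (hcl z (ball_subset_closedBall hz.1))
  intro h0
  apply key
  rw [circleIntegral]
  have e := intervalIntegral.smul_integral_comp_mul_left (a := 0) (b := 1)
    (fun θ : ℝ => deriv (circleMap w₁ r) θ • ((circleMap w₁ r θ - w₁)⁻¹
      + (circleMap w₁ r θ - w₂)⁻¹)) (2 * Real.pi)
  rw [mul_zero, mul_one] at e
  rw [← e, ← intervalIntegral.integral_smul, ← h0]
  apply intervalIntegral.integral_congr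
  intro t _
  have hd : HasDerivAt (fun t : ℝ => circleMap w₁ r (2 * Real.pi * t))
      ((2 * Real.pi) • deriv (circleMap w₁ r) (2 * Real.pi * t)) t := by
    have h1 : HasDerivAt (circleMap w₁ r) (deriv (circleMap w₁ r) (2 * Real.pi * t))
        (2 * Real.pi * t) := (differentiable_circleMap w₁ r _).hasDerivAt
    have h2 : HasDerivAt (fun t : ℝ => 2 * Real.pi * t) (2 * Real.pi) t := by
      simpa using (hasDerivAt_id t).const_mul (2 * Real.pi)
    exact h1.scomp t h2
  simp only [hd.deriv, smul_eq_mul, smul_mul_assoc]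

lemma three_integrals {Ω : Set ℂ} {w₁ w₂ : ℂ} (hw₁ : w₁ ∈ Ω) (hw₂ : w₂ ∈ Ω)
    {A C B : ℝ → ℂ} (hA : ContDiff ℝ 1 A) (hC : ContDiff ℝ 1 C)
    (hB : ContDiff ℝ 1 B) (h1 : A 1 = C 0) (h2 : C 1 = B 0)
    (hA' : ∀ t ∈ Icc (0:ℝ) 1, A t ∉ Ω)
    (hC' : ∀ t ∈ Icc (0:ℝ) 1, C t ∉ Ω) (hB' : ∀ t ∈ Icc (0:ℝ) 1, B t ∉ Ω)
    (hB1 : B 1 = w₁ + w₂) (hp₁ : ‖A 0‖ < ‖w₁‖) (hp₂ : ‖A 0‖ < ‖w₂‖)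
    (hcont : ∀ γ : ℝ → ℂ, PiecewiseC1On γ 0 1 → γ 0 = A 0 → (∀ t ∈ Icc (0:ℝ) 1, γ t ∉ Ω) →
      ContinuableAlong (conv (fun z => (z - w₁)⁻¹) (fun z => (z - w₂)⁻¹)) γ 0 1) :
    (∫ t in (0:ℝ)..1, deriv A t * ((A t - w₁)⁻¹ + (A t - w₂)⁻¹)) +
    (∫ t in (0:ℝ)..1, deriv C t * ((C t - w₁)⁻¹ + (C t - w₂)⁻¹)) +
    (∫ t in (0:ℝ)..1, deriv B t * ((B t - w₁)⁻¹ + (B t - w₂)⁻¹)) =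
    - ((A 0 - (w₁ + w₂)) * conv (fun z => (z - w₁)⁻¹) (fun z => (z - w₂)⁻¹) (A 0)) := by
  set γ := cat3 A C B with hγdef
  have hγ := cat3_piecewise hA hC hB h1 h2
  have hav := cat3_avoid hA' hC' hB'
  rw [← hγdef] at hγ hav
  have hγ0 : γ 0 = A 0 := by
    have := cat3_A (A := A) (C := C) (B := B) (t := 0) (by simp)
    simpa using this
  obtain ⟨g, hg⟩ := hcont γ hγ hγ0 hav
  obtain ⟨F, hF, hF0⟩ := gchain_of_contAlong hγ.1 hg
  have hG : GChain γ (fun t z => (z - (w₁ + w₂)) * F t z) := by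
    intro t ht
    refine ⟨(analyticAt_id.sub analyticAt_const).mul (hF t ht).1, ?_⟩
    filter_upwards [(hF t ht).2] with s hs
    filter_upwards [hs] with z hz
    rw [hz]
  have hG' : GChain γ (fun t => deriv (fun z => (z - (w₁ + w₂)) * F t z)) := by
    intro t ht
    refine ⟨(hG t ht).1.deriv, ?_⟩
    filter_upwards [(hG t ht).2] with s hs
    exact hs.deriv
  have hφa : ∀ t ∈ Icc (0:ℝ) 1,
      AnalyticAt ℂ (fun z : ℂ => (z - w₁)⁻¹ + (z - w₂)⁻¹) (γ t) := by
    intro t ht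
    have n1 : γ t - w₁ ≠ 0 := fun h0 => hav t ht (by rwa [sub_eq_zero.1 h0])
    have n2 : γ t - w₂ ≠ 0 := fun h0 => hav t ht (by rwa [sub_eq_zero.1 h0])
    exact ((analyticAt_id.sub analyticAt_const).inv n1).add
      ((analyticAt_id.sub analyticAt_const).inv n2)
  have hφ : GChain γ (fun _ z => (z - w₁)⁻¹ + (z - w₂)⁻¹) := by
    intro t ht
    exact ⟨hφa t ht, Eventually.of_forall fun _ => EventuallyEq.rfl⟩
  have hu := GChain.unique hγ.1 hG' hφ (by
    have e1 : (fun z => (z - (w₁ + w₂)) * F 0 z) =ᶠ[𝓝 (γ 0)]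
        fun z => (z - (w₁ + w₂)) * conv (fun z => (z - w₁)⁻¹) (fun z => (z - w₂)⁻¹) z := by
      filter_upwards [hF0] with z hz
      rw [hz]
    refine e1.deriv.trans ?_
    rw [hγ0]
    exact deriv_conv_log hp₁ hp₂)
  have hd : ∀ t ∈ Icc (0:ℝ) 1, deriv (fun z => (z - (w₁ + w₂)) * F t z) (γ t) =
      (fun z => (z - w₁)⁻¹ + (z - w₂)⁻¹) (γ t) := fun t ht => (hu t ht).eq_of_nhds
  have iA := ftc_piece hG hd (fun t ht => (hφa t ht).continuousAt) hA 0 le_rfl (by norm_num)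
    (fun t ht => cat3_A ht)
  have iC := ftc_piece hG hd (fun t ht => (hφa t ht).continuousAt) hC 1 (by norm_num)
    (by norm_num) (fun t ht => cat3_C h1 ht)
  have iB := ftc_piece hG hd (fun t ht => (hφa t ht).continuousAt) hB 2 (by norm_num)
    (by norm_num) (fun t ht => cat3_B h2 ht)
  have hF0' : F 0 (A 0) = conv (fun z => (z - w₁)⁻¹) (fun z => (z - w₂)⁻¹) (A 0) := by
    have := hF0.eq_of_nhds
    rwa [hγ0] at this
  rw [iA, iC, iB, hB1, h1, h2, ← hF0']
  norm_num
  ring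

lemma necessity {Ω : Set ℂ} (hcl : IsClosed Ω) (hdisc : DiscreteTopology Ω)
    (hconv : ∀ f g : ℂ → ℂ, OmegaCont Ω f → OmegaCont Ω g → OmegaCont Ω (conv f g)) :
    ∀ ω₁ ∈ Ω, ∀ ω₂ ∈ Ω, ω₁ + ω₂ ∈ Ω := by
  intro w₁ hw₁ w₂ hw₂
  by_cases h10 : w₁ = 0
  · rwa [h10, zero_add]
  by_cases h20 : w₂ = 0
  · rwa [h20, add_zero]
  by_contra hw
  have hcount : Ω.Countable := by
    have : Countable Ω := countable_of_Lindelof_of_discrete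
    exact this
  obtain ⟨R, hR, -, hRav, hRc⟩ := hconv _ _ (omegaCont_inv hcl hdisc hw₁ h10)
    (omegaCont_inv hcl hdisc hw₂ h20)
  -- base point
  obtain ⟨ρ, hρ0, hρ⟩ : ∃ ρ : ℝ, 0 < ρ ∧ ρ < min R (min ‖w₁‖ ‖w₂‖) :=
    exists_between (lt_min hR (lt_min (norm_pos_iff.2 h10) (norm_pos_iff.2 h20)))
  have hρn : ‖(ρ : ℂ)‖ = ρ := by rw [Complex.norm_real, Real.norm_of_nonneg hρ0.le]
  have hp0 : (ρ : ℂ) ≠ 0 := by exact_mod_cast hρ0.ne'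
  have hpR : (ρ : ℂ) ∈ ball (0:ℂ) R := by
    rw [mem_ball_zero_iff, hρn]
    exact hρ.trans_le (min_le_left _ _)
  have hp₁ : ‖(ρ : ℂ)‖ < ‖w₁‖ := by
    rw [hρn]
    exact hρ.trans_le ((min_le_right _ _).trans (min_le_left _ _))
  have hp₂ : ‖(ρ : ℂ)‖ < ‖w₂‖ := by
    rw [hρn]
    exact hρ.trans_le ((min_le_right _ _).trans (min_le_right _ _))
  have hpΩ : (ρ : ℂ) ∉ Ω := hRav _ hpR hp0
  -- loop
  obtain ⟨r', hr', hiso⟩ := isolated hcl hdisc w₁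
  obtain ⟨r, hr, hrr⟩ := exists_between hr'
  have hcb : ∀ z ∈ closedBall w₁ r, z ≠ w₁ → z ∉ Ω := fun z hz =>
    hiso z (closedBall_subset_ball hrr hz)
  have hcirc : ∀ t : ℝ, circleMap w₁ r (2 * Real.pi * t) ∉ Ω := fun t =>
    hcb _ (circleMap_mem_closedBall _ hr.le _) (circleMap_ne_center hr.ne')
  have hw₂' : w₂ = w₁ ∨ w₂ ∉ closedBall w₁ r := by
    by_cases h : w₂ = w₁
    · exact Or.inl h
    · exact Or.inr fun hmem => hcb _ hmem h hw₂
  have hq : circleMap w₁ r 0 ∉ Ω := by simpa only [mul_zero] using hcirc 0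
  obtain ⟨A, hA, hA0, hA1, hA'⟩ := exists_avoid hcount hpΩ hq
  obtain ⟨B, hB, hB0, hB1, hB'⟩ := exists_avoid hcount hq hw
  have hcont : ∀ γ : ℝ → ℂ, PiecewiseC1On γ 0 1 → γ 0 = A 0 →
      (∀ t ∈ Icc (0:ℝ) 1, γ t ∉ Ω) →
      ContinuableAlong (conv (fun z => (z - w₁)⁻¹) (fun z => (z - w₂)⁻¹)) γ 0 1 := by
    intro γ hγ h0 hav
    rw [hA0] at h0
    exact hRc γ hγ (by rwa [h0]) (by rwa [h0]) hav
  rw [← hA0] at hp₁ hp₂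
  have hloop : ContDiff ℝ 1 (fun t : ℝ => circleMap w₁ r (2 * Real.pi * t)) :=
    (contDiff_circleMap w₁ r).comp (contDiff_const.mul contDiff_id)
  have I1 := three_integrals hw₁ hw₂ hA (contDiff_const (c := circleMap w₁ r 0)) hB hA1 hB0.symm
    hA' (fun _ _ => hq) hB' hB1 hp₁ hp₂ hcont
  have I2 := three_integrals hw₁ hw₂ hA hloop hB (by simpa only [mul_zero] using hA1)
    (by
      rw [hB0, mul_one]
      simpa using periodic_circleMap w₁ r 0)
    hA' (fun t _ => hcirc t) hB' hB1 hp₁ hp₂ hcont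
  apply loop_integral hr hw₂'
  rw [← I1] at I2
  have hz : (∫ t in (0:ℝ)..1, deriv (fun _ : ℝ => circleMap w₁ r 0) t *
      ((circleMap w₁ r 0 - w₁)⁻¹ + (circleMap w₁ r 0 - w₂)⁻¹)) = 0 := by
    simp
  rw [hz] at I2
  have I3 := add_right_cancel I2
  exact add_left_cancel I3

/-- **Theorem (Sauzin).** For a non-empty closed discrete `Ω ⊂ ℂ`, the space of
`Ω`-continuable germs is stable under convolution iff `Ω` is stable under addition. -/
theorem stmt0 (Ω : Set ℂ) (hne : Ω.Nonempty) (hcl : IsClosed Ω)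
    (hdisc : DiscreteTopology Ω) :
    (∀ f g : ℂ → ℂ, OmegaCont Ω f → OmegaCont Ω g → OmegaCont Ω (conv f g)) ↔
      ∀ ω₁ ∈ Ω, ∀ ω₂ ∈ Ω, ω₁ + ω₂ ∈ Ω := by
  exact ⟨fun h => necessity hcl hdisc h,
    fun hadd f g hf hg => sufficiency hne hcl hadd f g hf hg⟩
end
end

section
/- Let ω₁, ω₂ ∈ ℂ∖{0} and let φ̂₁(ζ) = 1/(ζ−ω₁), φ̂₂(ζ) = 1/(ζ−ω₂) (germs at 0). Then φ̂₁ and φ̂₂ belong to R̂_{{ω₁,ω₂}}, but φ̂₁ * φ̂₂ does not belong to R̂_{{ω₁,ω₂}}: there exists a path from 0 to ω₁+ω₂ avoiding ω₁ and ω₂ along which φ̂₁ * φ̂₂ admits no analytic continuation. Consequently, if Ω is a non-empty closed discrete subset of ℂ which is not stable under addition, then R̂_Ω is not stable under convolution. -/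
open Set Metric Filter Topology intervalIntegral

noncomputable section

lemma conv_formula (a b z : ℂ) (ha : a ≠ 0) (hb : b ≠ 0) (hza : ‖z‖ < ‖a‖) (hzb : ‖z‖ < ‖b‖) :
    conv (fun ζ => (ζ - a)⁻¹) (fun ζ => (ζ - b)⁻¹) z * (z - (a + b)) =
      Complex.log (1 + -(z / a)) + Complex.log (1 + -(z / b)) := by
  have key : ∀ c : ℂ, c ≠ 0 → ‖z‖ < ‖c‖ → ∀ t ∈ Set.uIcc (0:ℝ) 1, (t:ℂ) * z - c ≠ 0 := by
    intro c hc hzc t ht h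
    rw [Set.uIcc_of_le zero_le_one] at ht
    have h1 : (t:ℂ) * z = c := sub_eq_zero.mp h
    have h2 : ‖(t:ℂ) * z‖ ≤ ‖z‖ := by
      rw [norm_mul, Complex.norm_real, Real.norm_of_nonneg ht.1]
      exact mul_le_of_le_one_left (norm_nonneg _) ht.2
    rw [h1] at h2
    linarith
  have hlog : ∀ c : ℂ, c ≠ 0 → ‖z‖ < ‖c‖ →
      Complex.log (1 + -(z / c)) = z * ∫ t in (0:ℝ)..1, ((t:ℂ) * z - c)⁻¹ := by
    intro c hc hzc
    have hn : ‖-(z / c)‖ < 1 := by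
      rw [norm_neg, norm_div, div_lt_one (norm_pos_iff.mpr hc)]; exact hzc
    rw [Complex.log_eq_integral (Complex.mem_slitPlane_of_norm_lt_one hn),
      ← intervalIntegral.integral_const_mul, ← intervalIntegral.integral_const_mul]
    apply intervalIntegral.integral_congr
    intro t ht
    have h0 := key c hc hzc t ht
    have h3 : 1 + t • -(z / c) = -((t:ℂ) * z - c) / c := by
      rw [Complex.real_smul]; field_simp; ring
    simp only [h3]
    rw [inv_div]
    field_simp
  have hIntg : ∀ c : ℂ, c ≠ 0 → ‖z‖ < ‖c‖ →
      IntervalIntegrable (fun t : ℝ => ((t:ℂ) * z - c)⁻¹) MeasureTheory.volume 0 1 := by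
    intro c hc hzc
    apply ContinuousOn.intervalIntegrable
    apply ContinuousOn.inv₀ (by fun_prop)
    exact key c hc hzc
  have hflip : ∫ t in (0:ℝ)..1, ((t:ℂ) * z - b)⁻¹ =
      ∫ t in (0:ℝ)..1, ((1 - (t:ℂ)) * z - b)⁻¹ := by
    have := intervalIntegral.integral_comp_sub_left (a := 0) (b := 1)
      (fun t : ℝ => ((t:ℂ) * z - b)⁻¹) 1
    simp at this
    exact this.symm
  have hIntg2 : IntervalIntegrable (fun t : ℝ => ((1 - (t:ℂ)) * z - b)⁻¹)
      MeasureTheory.volume 0 1 := by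
    have := ((hIntg b hb hzb).comp_sub_left 1).symm
    simpa using this
  rw [hlog a ha hza, hlog b hb hzb, hflip, ← mul_add,
    ← intervalIntegral.integral_add (hIntg a ha hza) hIntg2, conv, mul_assoc,
    ← intervalIntegral.integral_mul_const]
  congr 1
  apply intervalIntegral.integral_congr
  intro t ht
  have h1 := key a ha hza t ht
  have h2 := key b hb hzb (1 - t) (by
    rw [Set.uIcc_of_le zero_le_one] at ht ⊢
    exact ⟨by linarith [ht.2], by linarith [ht.1]⟩)
  push_cast at h2
  simp only
  generalize hx : (t:ℂ) * z - a = x at *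
  generalize hy : (1 - (t:ℂ)) * z - b = y at *
  have h3 : z - (a + b) = x + y := by rw [← hx, ← hy]; ring
  rw [h3]
  field_simp
  ring

lemma conv_deriv (a b s : ℂ) (ha : a ≠ 0) (hb : b ≠ 0) (hza : ‖s‖ < ‖a‖) (hzb : ‖s‖ < ‖b‖) :
    ∀ᶠ z in 𝓝 s, HasDerivAt (fun z => conv (fun ζ => (ζ - a)⁻¹) (fun ζ => (ζ - b)⁻¹) z *
      (z - (a + b))) ((z - a)⁻¹ + (z - b)⁻¹) z := by
  have hU : ∀ᶠ z in 𝓝 s, ‖z‖ < ‖a‖ ∧ ‖z‖ < ‖b‖ :=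
    (continuous_norm.continuousAt.eventually_lt continuousAt_const hza).and
      (continuous_norm.continuousAt.eventually_lt continuousAt_const hzb)
  filter_upwards [hU.eventually_nhds] with z hz
  have hE : (fun z => conv (fun ζ => (ζ - a)⁻¹) (fun ζ => (ζ - b)⁻¹) z * (z - (a + b))) =ᶠ[𝓝 z]
      fun z => Complex.log (1 + -(z / a)) + Complex.log (1 + -(z / b)) := by
    filter_upwards [hz] with w hw
    exact conv_formula a b w ha hb hw.1 hw.2
  refine HasDerivAt.congr_of_eventuallyEq ?_ hE
  have h1 : ∀ c : ℂ, c ≠ 0 → ‖z‖ < ‖c‖ →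
      HasDerivAt (fun z => Complex.log (1 + -(z / c))) ((z - c)⁻¹) z := by
    intro c hc hzc
    have hn : ‖-(z / c)‖ < 1 := by
      rw [norm_neg, norm_div, div_lt_one (norm_pos_iff.mpr hc)]; exact hzc
    have h2 : HasDerivAt (fun z : ℂ => 1 + -(z / c)) (-(1 / c)) z :=
      (((hasDerivAt_id z).div_const c).neg).const_add 1
    have := h2.clog (Complex.mem_slitPlane_of_norm_lt_one hn)
    convert this using 1
    have h5 : z - c ≠ 0 := by
      intro h; rw [sub_eq_zero.mp h] at hzc; exact lt_irrefl _ hzc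
    have h6 : 1 + -(z / c) = -(z - c) / c := by field_simp; ring
    rw [h6]; field_simp
  exact (h1 a ha hz.self_of_nhds.1).add (h1 b hb hz.self_of_nhds.2)

/-- Along a continuation of `conv`, the function `(z-(a+b)) F(z)` is a primitive of
`1/(z-a) + 1/(z-b)`. -/
lemma prim_along (f : ℂ → ℂ) (γ : ℝ → ℂ) (a b : ℂ) (hc : ContinuousOn γ (Icc 0 1))
    (hf : ∀ᶠ z in 𝓝 (γ 0), HasDerivAt (fun z => f z * (z - (a + b))) ((z - a)⁻¹ + (z - b)⁻¹) z)
    (hav : ∀ t ∈ Icc (0:ℝ) 1, γ t ≠ a ∧ γ t ≠ b)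
    (h1 : γ 1 = a + b) (hcont : ContinuableAlong f γ 0 1) :
    ∃ G : ℝ → ℂ, G 0 = f (γ 0) * (γ 0 - (a + b)) ∧ G 1 = 0 ∧
      ∀ t ∈ Icc (0:ℝ) 1, ∃ g : ℂ → ℂ, HasDerivAt g ((γ t - a)⁻¹ + (γ t - b)⁻¹) (γ t) ∧
        ∀ᶠ t' in 𝓝[Icc 0 1] t, G t' = g (γ t') := by
  obtain ⟨g₁, F, r, hF, hcomp, h0, -⟩ := hcont
  set A : ℝ → ℂ → ℂ := fun t z => deriv (fun z => F t z * (z - (a + b))) z * ((z - a) * (z - b)) -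
    ((z - a) + (z - b)) with hA
  have hAan : ∀ t ∈ Icc (0:ℝ) 1, AnalyticOnNhd ℂ (A t) (ball (γ t) (r t)) := by
    intro t ht
    have h2 : AnalyticOnNhd ℂ (fun z => F t z * (z - (a + b))) (ball (γ t) (r t)) :=
      (hF t ht).2.mul (fun z _ => by fun_prop)
    exact ((h2.deriv).mul (fun z _ => by fun_prop)).sub (fun z _ => by fun_prop)
  have hball : ∀ t ∈ Icc (0:ℝ) 1, ∀ z ∈ ball (γ t) (r t), (∀ᶠ w in 𝓝 z, A t w = 0) →
      ∀ w ∈ ball (γ t) (r t), A t w = 0 := by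
    intro t ht z hz hzw w hw
    exact (hAan t ht).eqOn_zero_of_preconnected_of_eventuallyEq_zero
      (convex_ball _ _).isPreconnected hz hzw hw
  have hnear : ∀ t ∈ Icc (0:ℝ) 1, ∀ᶠ t' in 𝓝[Icc 0 1] t, t' ∈ Icc (0:ℝ) 1 ∧
      γ t' ∈ ball (γ t) (r t) ∧
      EqOn (F t) (F t') (ball (γ t) (r t) ∩ ball (γ t') (r t')) := by
    intro t ht
    obtain ⟨ε, hε, hε'⟩ := hcomp t ht
    have e1 : ∀ᶠ t' in 𝓝[Icc 0 1] t, |t' - t| < ε := by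
      apply mem_nhdsWithin_of_mem_nhds
      have := ball_mem_nhds t hε
      simpa [Metric.ball, Real.dist_eq] using this
    have e2 : ∀ᶠ t' in 𝓝[Icc 0 1] t, γ t' ∈ ball (γ t) (r t) :=
      (hc t ht) (ball_mem_nhds _ (hF t ht).1)
    filter_upwards [e1, e2, self_mem_nhdsWithin] with t' i1 i2 i3
    exact ⟨i3, i2, hε' t' i3 i1⟩
  have hprop : ∀ t ∈ Icc (0:ℝ) 1, ((∀ᶠ w in 𝓝 (γ 0), A 0 w = 0) ↔ ∀ᶠ w in 𝓝 (γ t), A t w = 0) := by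
    intro t ht
    refine isPreconnected_Icc.induction₂ (s := Icc (0:ℝ) 1)
      (fun x y => ((∀ᶠ w in 𝓝 (γ x), A x w = 0) ↔ ∀ᶠ w in 𝓝 (γ y), A y w = 0)) ?_ ?_ ?_
      (left_mem_Icc.mpr zero_le_one) ht
    · intro x hx
      filter_upwards [hnear x hx] with y ⟨hy, hyb, hE⟩
      have hAE : ∀ᶠ w in 𝓝 (γ y), A x w = A y w := by
        have hO : ball (γ x) (r x) ∩ ball (γ y) (r y) ∈ 𝓝 (γ y) :=
          (isOpen_ball.inter isOpen_ball).mem_nhds ⟨hyb, mem_ball_self (hF y hy).1⟩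
        have : ∀ᶠ w in 𝓝 (γ y), F x w = F y w := by
          filter_upwards [hO] with w hw using hE hw
        filter_upwards [this.eventually_nhds] with w hw
        have : (fun z => F x z * (z - (a + b))) =ᶠ[𝓝 w] (fun z => F y z * (z - (a + b))) := by
          filter_upwards [hw] with v hv
          rw [hv]
        simp only [hA, this.deriv_eq]
      constructor
      · intro h
        have h3 := hball x hx _ (mem_ball_self (hF x hx).1) h
        filter_upwards [hAE, isOpen_ball.mem_nhds hyb] with w hw hwb
        rw [← hw, h3 w hwb]
      · intro h
        have h4 : ∀ᶠ w in 𝓝 (γ y), A x w = 0 := by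
          filter_upwards [hAE, h] with w hw hw2
          rw [hw, hw2]
        have h3 := hball x hx _ hyb h4
        filter_upwards [ball_mem_nhds (γ x) (hF x hx).1] with w hw using h3 w hw
    · intro x y z _ _ _ h h'; exact h.trans h'
    · intro x y _ _ h; exact h.symm
  have hA0 : ∀ᶠ w in 𝓝 (γ 0), A 0 w = 0 := by
    have hav0 := hav 0 (left_mem_Icc.mpr zero_le_one)
    filter_upwards [hf, h0.eventually_nhds, isOpen_ne.mem_nhds hav0.1,
      isOpen_ne.mem_nhds hav0.2] with w hw hw2 hwa hwb
    have : (fun z => F 0 z * (z - (a + b))) =ᶠ[𝓝 w] (fun z => f z * (z - (a + b))) := by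
      filter_upwards [hw2] with v hv
      rw [hv]
    have i1 : w - a ≠ 0 := sub_ne_zero.mpr hwa
    have i2 : w - b ≠ 0 := sub_ne_zero.mpr hwb
    simp only [hA, this.deriv_eq, hw.deriv]
    field_simp
    ring
  refine ⟨fun t => F t (γ t) * (γ t - (a + b)), ?_, ?_, ?_⟩
  · simp only [h0.self_of_nhds]
  · simp only [h1, sub_self, mul_zero]
  · intro t ht
    refine ⟨fun z => F t z * (z - (a + b)), ?_, ?_⟩
    · have hd : DifferentiableAt ℂ (fun z => F t z * (z - (a + b))) (γ t) :=
        ((hF t ht).2 _ (mem_ball_self (hF t ht).1)).differentiableAt.mul (by fun_prop)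
      have h5 := ((hprop t ht).mp hA0).self_of_nhds
      have hav0 := hav t ht
      have i1 : γ t - a ≠ 0 := sub_ne_zero.mpr hav0.1
      have i2 : γ t - b ≠ 0 := sub_ne_zero.mpr hav0.2
      simp only [hA] at h5
      have h6 := sub_eq_zero.mp h5
      have h7 : (γ t - a)⁻¹ + (γ t - b)⁻¹ = deriv (fun z => F t z * (z - (a + b))) (γ t) := by
        refine mul_right_cancel₀ (mul_ne_zero i1 i2) (Eq.trans ?_ h6.symm)
        field_simp
        ring
      rw [h7]
      exact hd.hasDerivAt
    · filter_upwards [hnear t ht] with y ⟨hy, hyb, hE⟩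
      rw [hE ⟨hyb, mem_ball_self (hF y hy).1⟩]

/-- The increments of two functions with the same derivative agree. -/
lemma incr_eq (G H : ℝ → ℂ) (D : ℝ → ℂ) (c d : ℝ) (hcd : c ≤ d)
    (hG : ∀ t ∈ Icc c d, HasDerivWithinAt G (D t) (Icc c d) t)
    (hH : ∀ t ∈ Icc c d, HasDerivWithinAt H (D t) (Icc c d) t) :
    G d - G c = H d - H c := by
  have := (convex_Icc c d).norm_image_sub_le_of_norm_hasDerivWithin_le (C := 0)
    (f := fun t => G t - H t) (f' := fun t => D t - D t)
    (fun t ht => (hG t ht).sub (hH t ht)) (fun t _ => by simp)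
    (left_mem_Icc.mpr hcd) (right_mem_Icc.mpr hcd)
  rw [zero_mul] at this
  have h := norm_le_zero_iff.mp this
  linear_combination h

/-- Two points off a countable set are joined by a parabola avoiding the set. -/
lemma exists_parabola (Ω : Set ℂ) (hΩ : Ω.Countable) (p q : ℂ) (hp : p ∉ Ω) (hq : q ∉ Ω) :
    ∃ m : ℂ, ∀ t ∈ Icc (0:ℝ) 1, p + t * (q - p) + t * (1 - t) * m ∉ Ω := by
  by_cases hpq : q = p
  · refine ⟨0, fun t _ => ?_⟩
    simpa [hpq] using hp
  have hd : q - p ≠ 0 := sub_ne_zero.mpr hpq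
  let bad : ℂ → ℝ := fun w => ((w - p) / (q - p)).im /
    (((w - p) / (q - p)).re * (1 - ((w - p) / (q - p)).re))
  have hc : (Set.image bad Ω).Countable := hΩ.image bad
  have : ∃ x : ℝ, x ∉ Set.image bad Ω := by
    by_contra! h
    exact Cardinal.not_countable_real (hc.mono (fun x _ => h x))
  obtain ⟨x, hx⟩ := this
  refine ⟨(q - p) * (Complex.I * x), fun t ht hmem => ?_⟩
  by_cases ht0 : t = 0
  · simp [ht0] at hmem; exact hp hmem
  by_cases ht1 : t = 1
  · simp [ht1] at hmem; exact hq hmem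
  apply hx
  refine ⟨_, hmem, ?_⟩
  have e : (p + t * (q - p) + t * (1 - t) * ((q - p) * (Complex.I * x)) - p) / (q - p) =
      (t : ℂ) + ((t * (1 - t) * x : ℝ) : ℂ) * Complex.I := by
    push_cast
    field_simp
    ring
  simp only [bad, e]
  have h1 : (1 - t) ≠ 0 := sub_ne_zero.mpr (Ne.symm ht1)
  simp only [Complex.add_re, Complex.add_im, Complex.re_ofReal_mul, Complex.im_ofReal_mul,
    Complex.ofReal_re, Complex.ofReal_im, Complex.I_re, Complex.I_im,
    mul_zero, mul_one, add_zero, zero_add]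
  field_simp

/-- the three-piece path -/
def threePath (P L Q : ℝ → ℂ) (t : ℝ) : ℂ :=
  if t ≤ 1/3 then P (3 * t) else if t ≤ 2/3 then L (3 * t - 1) else Q (3 * t - 2)

section three
variable (P L Q : ℝ → ℂ) (h1 : P 1 = L 0) (h2 : L 1 = Q 0)

lemma threePath_left (t : ℝ) (ht : t ∈ Icc (0:ℝ) (1/3)) : threePath P L Q t = P (3 * t) := by
  rw [threePath, if_pos ht.2]

lemma threePath_mid (h1 : P 1 = L 0) (t : ℝ) (ht : t ∈ Icc (1/3:ℝ) (2/3)) :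
    threePath P L Q t = L (3 * t - 1) := by
  rcases eq_or_lt_of_le ht.1 with h | h
  · rw [threePath, if_pos h.symm.le, ← h]; norm_num [h1]
  · rw [threePath, if_neg (not_le.mpr h), if_pos ht.2]

lemma threePath_right (h2 : L 1 = Q 0) (t : ℝ) (ht : t ∈ Icc (2/3:ℝ) 1) :
    threePath P L Q t = Q (3 * t - 2) := by
  rcases eq_or_lt_of_le ht.1 with h | h
  · rw [threePath, if_neg (by rw [← h]; norm_num), if_pos h.symm.le, ← h]; norm_num [h2]
  · rw [threePath, if_neg (not_le.mpr (by linarith)), if_neg (not_le.mpr h)]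

lemma threePath_piecewise (h1 : P 1 = L 0) (h2 : L 1 = Q 0) (hP : ContDiff ℝ 1 P)
    (hL : ContDiff ℝ 1 L) (hQ : ContDiff ℝ 1 Q) : PiecewiseC1On (threePath P L Q) 0 1 := by
  refine ⟨?_, 3, fun i => (i:ℝ) / 3, by norm_num, by norm_num, fun i _ => by push_cast; linarith, ?_⟩
  · have : Continuous (threePath P L Q) := by
      unfold threePath
      have hP := hP.continuous
      have hL := hL.continuous
      have hQ := hQ.continuous
      refine Continuous.if_le (by fun_prop) (Continuous.if_le (by fun_prop) (by fun_prop)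
        (by fun_prop) (by fun_prop) ?_) (by fun_prop) (by fun_prop) ?_
      · rintro x rfl; norm_num [h2]
      · rintro x rfl; norm_num [h1]
    exact this.continuousOn
  · intro i hi
    interval_cases i
    · refine ContDiffOn.congr (f := fun t => P (3 * t)) (ContDiff.contDiffOn (by fun_prop)) ?_
      intro t ht
      exact threePath_left P L Q t (by simpa using ht)
    · refine ContDiffOn.congr (f := fun t => L (3 * t - 1)) (ContDiff.contDiffOn (by fun_prop)) ?_
      intro t ht
      exact threePath_mid P L Q h1 t (by norm_num at ht ⊢; exact ht)
    · refine ContDiffOn.congr (f := fun t => Q (3 * t - 2)) (ContDiff.contDiffOn (by fun_prop)) ?_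
      intro t ht
      exact threePath_right P L Q h2 t (by norm_num at ht ⊢; exact ht)

lemma threePath_avoid (h1 : P 1 = L 0) (h2 : L 1 = Q 0) (Ω : Set ℂ)
    (hP : ∀ t ∈ Icc (0:ℝ) 1, P t ∉ Ω) (hL : ∀ t ∈ Icc (0:ℝ) 1, L t ∉ Ω)
    (hQ : ∀ t ∈ Icc (0:ℝ) 1, Q t ∉ Ω) : ∀ t ∈ Icc (0:ℝ) 1, threePath P L Q t ∉ Ω := by
  intro t ht
  by_cases c1 : t ≤ 1/3
  · rw [threePath_left P L Q t ⟨ht.1, c1⟩]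
    exact hP _ ⟨by linarith [ht.1], by linarith⟩
  by_cases c2 : t ≤ 2/3
  · rw [threePath_mid P L Q h1 t ⟨by linarith, c2⟩]
    exact hL _ ⟨by linarith [ht.1], by linarith⟩
  · rw [threePath_right P L Q h2 t ⟨by linarith, ht.2⟩]
    exact hQ _ ⟨by linarith [ht.1], by linarith [ht.2]⟩
end three

/-- derivative of a primitive along a path on a subinterval -/
lemma prim_deriv (γ G : ℝ → ℂ) (a b : ℂ) (h : ∀ t ∈ Icc (0:ℝ) 1, ∃ g : ℂ → ℂ,
      HasDerivAt g ((γ t - a)⁻¹ + (γ t - b)⁻¹) (γ t) ∧ ∀ᶠ t' in 𝓝[Icc 0 1] t, G t' = g (γ t'))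
    (c d : ℝ) (hc : 0 ≤ c) (hd : d ≤ 1) (p : ℝ → ℂ)
    (hp : ∀ t, DifferentiableAt ℝ p t) (hγ : ∀ t ∈ Icc c d, γ t = p t) :
    ∀ t ∈ Icc c d, HasDerivWithinAt G (((p t - a)⁻¹ + (p t - b)⁻¹) * deriv p t) (Icc c d) t := by
  intro t ht
  obtain ⟨g, hg, hG⟩ := h t ⟨hc.trans ht.1, ht.2.trans hd⟩
  rw [hγ t ht] at hg
  have h3 : HasDerivAt (g ∘ p) (((p t - a)⁻¹ + (p t - b)⁻¹) * deriv p t) t :=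
    HasDerivAt.comp t hg (hp t).hasDerivAt
  have h4 : ∀ᶠ t' in 𝓝[Icc c d] t, G t' = (g ∘ p) t' := by
    filter_upwards [hG.filter_mono (nhdsWithin_mono t (Icc_subset_Icc hc hd)),
      self_mem_nhdsWithin] with t' i1 i2
    rw [i1, hγ t' i2]; rfl
  exact h3.hasDerivWithinAt.congr_of_eventuallyEq_of_mem h4 ht

/-- the circular loop around `a`, run `k` times -/
def loopPath (a : ℂ) (ρ : ℝ) (k : ℕ) (t : ℝ) : ℂ :=
  a + ρ * Complex.exp (2 * Real.pi * Complex.I * k * t)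

lemma loopPath_hasDerivAt (a : ℂ) (ρ : ℝ) (k : ℕ) (t : ℝ) :
    HasDerivAt (fun t => loopPath a ρ k (3 * t - 1))
      ((loopPath a ρ k (3 * t - 1) - a) * (6 * Real.pi * Complex.I * k)) t := by
  unfold loopPath
  have h1 : HasDerivAt (fun t : ℝ => 2 * Real.pi * Complex.I * k * ((3 * t - 1 : ℝ) : ℂ))
      (2 * Real.pi * Complex.I * k * ((3 * 1 : ℝ) : ℂ)) t := by
    have h0 : HasDerivAt (fun t : ℝ => 3 * t - 1) (3 * 1) t :=
      ((hasDerivAt_id t).const_mul 3).sub_const 1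
    exact h0.ofReal_comp.const_mul _
  have h2 := (h1.cexp.const_mul (ρ:ℂ)).const_add a
  refine h2.congr_deriv ?_
  push_cast
  ring

lemma loopPath_int (a : ℂ) (ρ : ℝ) (k : ℕ) (n : ℕ) : loopPath a ρ k n = a + ρ := by
  unfold loopPath
  have : Complex.exp (2 * Real.pi * Complex.I * k * (n:ℝ)) = 1 := by
    rw [Complex.exp_eq_one_iff]
    exact ⟨(k * n : ℕ), by push_cast; ring⟩
  rw [this, mul_one]

lemma loopPath_norm (a : ℂ) (ρ : ℝ) (hρ : 0 < ρ) (k : ℕ) (t : ℝ) : ‖loopPath a ρ k t - a‖ = ρ := by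
  unfold loopPath
  have : (2 * Real.pi * Complex.I * k * t : ℂ) = ((2 * Real.pi * k * t : ℝ) : ℂ) * Complex.I := by
    push_cast; ring
  rw [add_sub_cancel_left, norm_mul, this, Complex.norm_exp_ofReal_mul_I, Complex.norm_real,
    Real.norm_of_nonneg hρ.le, mul_one]

lemma loop_incr (a b : ℂ) (ρ : ℝ) (hρ : 0 < ρ) (hb : b ≠ a → ρ < ‖a - b‖) :
    ∃ N : ℂ, N ≠ 0 ∧ ∀ (k : ℕ) (G : ℝ → ℂ),
      (∀ t ∈ Icc (1/3:ℝ) (2/3), HasDerivWithinAt G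
        (((loopPath a ρ k (3 * t - 1) - a)⁻¹ + (loopPath a ρ k (3 * t - 1) - b)⁻¹) *
          deriv (fun t => loopPath a ρ k (3 * t - 1)) t) (Icc (1/3) (2/3)) t) →
      G (2/3) - G (1/3) = k * N := by
  have hpi : (2 * Real.pi * Complex.I : ℂ) ≠ 0 := Complex.two_pi_I_ne_zero
  have hne : ∀ (k : ℕ) t, loopPath a ρ k t - a ≠ 0 := by
    intro k t h
    have := loopPath_norm a ρ hρ k t
    rw [h, norm_zero] at this
    exact hρ.ne this
  have hlin : ∀ (k : ℕ) (t : ℝ), HasDerivAt (fun t : ℝ => (6 * Real.pi * Complex.I * k : ℂ) * t)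
      (6 * Real.pi * Complex.I * k) t := by
    intro k t
    simpa using (hasDerivAt_id t).ofReal_comp.const_mul (6 * Real.pi * Complex.I * k : ℂ)
  by_cases hab : b = a
  · refine ⟨2 * (2 * Real.pi * Complex.I), mul_ne_zero two_ne_zero hpi, fun k G hG => ?_⟩
    have := incr_eq G (fun t : ℝ => 2 * ((6 * Real.pi * Complex.I * k : ℂ) * t)) _ (1/3) (2/3)
      (by norm_num) hG (fun t _ => by
        refine ((hlin k t).const_mul 2).hasDerivWithinAt.congr_deriv ?_
        rw [(loopPath_hasDerivAt a ρ k t).deriv, hab]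
        have := hne k (3 * t - 1)
        field_simp
        ring)
    rw [this]
    push_cast
    ring
  · have hlt := hb hab
    have hab' : a - b ≠ 0 := sub_ne_zero.mpr (Ne.symm hab)
    refine ⟨2 * Real.pi * Complex.I, hpi, fun k G hG => ?_⟩
    have := incr_eq G (fun t : ℝ => (6 * Real.pi * Complex.I * k : ℂ) * t +
      Complex.log (1 + (loopPath a ρ k (3 * t - 1) - a) / (a - b))) _ (1/3) (2/3)
      (by norm_num) hG (fun t _ => by
        have hn : ‖(loopPath a ρ k (3 * t - 1) - a) / (a - b)‖ < 1 := by
          rw [norm_div, loopPath_norm a ρ hρ, div_lt_one (norm_pos_iff.mpr hab')]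
          exact hlt
        have hd := loopPath_hasDerivAt a ρ k t
        have h5 := (((hd.sub_const a).div_const (a - b)).const_add 1).clog_real
          (Complex.mem_slitPlane_of_norm_lt_one hn)
        refine ((hlin k t).add h5).hasDerivWithinAt.congr_deriv ?_
        rw [hd.deriv]
        have i1 := hne k (3 * t - 1)
        have i2 := Complex.slitPlane_ne_zero (Complex.mem_slitPlane_of_norm_lt_one hn)
        have i3 : 1 + (loopPath a ρ k (3 * t - 1) - a) / (a - b) =
          (loopPath a ρ k (3 * t - 1) - b) / (a - b) := by field_simp; ring
        rw [i3] at i2 ⊢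
        have i4 : loopPath a ρ k (3 * t - 1) - b ≠ 0 := fun h => by simp [h] at i2
        generalize loopPath a ρ k (3 * t - 1) = w at *
        field_simp)
    rw [this]
    have e0 : loopPath a ρ k (3 * (1/3) - 1) = a + ρ := by
      have := loopPath_int a ρ k 0
      norm_num at this ⊢; exact this
    have e1 : loopPath a ρ k (3 * (2/3) - 1) = a + ρ := by
      have := loopPath_int a ρ k 1
      norm_num at this ⊢; exact this
    simp only [e0, e1]
    push_cast
    ring

lemma main_path (Ω : Set ℂ) (hΩ : Ω.Countable)
    (hiso : ∀ x, ∃ R > 0, ∀ z ∈ ball x R, z ≠ x → z ∉ Ω)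
    (a b s : ℂ) (ha : a ∈ Ω) (hb : b ∈ Ω) (ha0 : a ≠ 0) (hb0 : b ≠ 0) (hab : a + b ∉ Ω)
    (hs : s ∉ Ω) (hsa : ‖s‖ < ‖a‖) (hsb : ‖s‖ < ‖b‖) :
    ∃ γ : ℝ → ℂ, PiecewiseC1On γ 0 1 ∧ γ 0 = s ∧ γ 1 = a + b ∧ (∀ t ∈ Icc (0:ℝ) 1, γ t ∉ Ω) ∧
      ¬ ContinuableAlong (conv (fun ζ => (ζ - a)⁻¹) (fun ζ => (ζ - b)⁻¹)) γ 0 1 := by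
  obtain ⟨R, hR, hRΩ⟩ := hiso a
  have hρ : 0 < R / 2 := half_pos hR
  set ρ := R / 2 with hρdef
  have hbρ : b ≠ a → ρ < ‖a - b‖ := by
    intro hba
    by_contra! h
    refine hRΩ b ?_ hba hb
    rw [mem_ball, dist_comm, dist_eq_norm]
    linarith
  have hcirc : ∀ z, ‖z - a‖ = ρ → z ∉ Ω := by
    intro z hz
    refine hRΩ z ?_ ?_
    · rw [mem_ball, dist_eq_norm]; linarith
    · rintro rfl; simp at hz; exact hρ.ne hz
  have hpρ : a + ρ ∉ Ω := hcirc _ (by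
    rw [add_sub_cancel_left, Complex.norm_real, Real.norm_of_nonneg hρ.le])
  obtain ⟨m, hm⟩ := exists_parabola Ω hΩ s (a + ρ) hs hpρ
  obtain ⟨n, hn⟩ := exists_parabola Ω hΩ (a + ρ) (a + b) hpρ hab
  obtain ⟨N, hN, hloop⟩ := loop_incr a b ρ hρ hbρ
  set P : ℝ → ℂ := fun t => s + t * (a + ρ - s) + t * (1 - t) * m with hP
  set Q : ℝ → ℂ := fun t => a + ρ + t * (a + b - (a + ρ)) + t * (1 - t) * n with hQ
  have hPL : ∀ k, P 1 = loopPath a ρ k 0 := by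
    intro k
    have := loopPath_int a ρ k 0
    simp only [Nat.cast_zero] at this
    rw [this]; simp [hP]
  have hLQ : ∀ k, loopPath a ρ k 1 = Q 0 := by
    intro k
    have := loopPath_int a ρ k 1
    simp only [Nat.cast_one] at this
    rw [this]; simp [hQ]
  have hofReal : ContDiff ℝ 1 (fun t : ℝ => (t:ℂ)) := Complex.ofRealCLM.contDiff
  have hPc : ContDiff ℝ 1 P := by fun_prop
  have hQc : ContDiff ℝ 1 Q := by fun_prop
  have hLc : ∀ k, ContDiff ℝ 1 (loopPath a ρ k) := by
    intro k; unfold loopPath; fun_prop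
  let γ : ℕ → ℝ → ℂ := fun k => threePath P (loopPath a ρ k) Q
  have hγpc : ∀ k, PiecewiseC1On (γ k) 0 1 := fun k =>
    threePath_piecewise _ _ _ (hPL k) (hLQ k) hPc (hLc k) hQc
  have hγ0 : ∀ k, γ k 0 = s := by
    intro k
    simp only [γ]
    rw [threePath_left _ _ _ 0 (by norm_num)]
    simp [hP]
  have hγ1 : ∀ k, γ k 1 = a + b := by
    intro k
    simp only [γ]
    rw [threePath_right _ _ _ (hLQ k) 1 (by norm_num)]
    norm_num [hQ]
  have hγav : ∀ k, ∀ t ∈ Icc (0:ℝ) 1, γ k t ∉ Ω := fun k =>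
    threePath_avoid _ _ _ (hPL k) (hLQ k) Ω hm
      (fun t _ => hcirc _ (loopPath_norm a ρ hρ k t)) hn
  by_contra! hcon
  have hC : ∀ k, ContinuableAlong (conv (fun ζ => (ζ - a)⁻¹) (fun ζ => (ζ - b)⁻¹)) (γ k) 0 1 :=
    fun k => hcon (γ k) (hγpc k) (hγ0 k) (hγ1 k) (hγav k)
  have hG := fun k => prim_along _ (γ k) a b (hγpc k).1
    (by rw [hγ0 k]; exact conv_deriv a b s ha0 hb0 hsa hsb)
    (fun t ht => ⟨fun h => hγav k t ht (h ▸ ha), fun h => hγav k t ht (h ▸ hb)⟩) (hγ1 k) (hC k)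
  choose G hG0 hG1 hGd using hG
  have hPd : ∀ t, DifferentiableAt ℝ (fun t => P (3 * t)) t := fun t =>
    (hPc.comp (by fun_prop : ContDiff ℝ 1 (fun t : ℝ => 3 * t))).differentiable (by norm_num) t
  have hQd : ∀ t, DifferentiableAt ℝ (fun t => Q (3 * t - 2)) t := fun t =>
    (hQc.comp (by fun_prop : ContDiff ℝ 1 (fun t : ℝ => 3 * t - 2))).differentiable (by norm_num) t
  have d1 := fun k => prim_deriv (γ k) (G k) a b (hGd k) 0 (1/3) le_rfl (by norm_num) _ hPd
    (fun t ht => threePath_left _ _ _ t ht)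
  have d2 := fun k => prim_deriv (γ k) (G k) a b (hGd k) (1/3) (2/3) (by norm_num) (by norm_num) _
    (fun t => (loopPath_hasDerivAt a ρ k t).differentiableAt)
    (fun t ht => threePath_mid _ _ _ (hPL k) t ht)
  have d3 := fun k => prim_deriv (γ k) (G k) a b (hGd k) (2/3) 1 (by norm_num) (by norm_num) _ hQd
    (fun t ht => threePath_right _ _ _ (hLQ k) t ht)
  have e1 := incr_eq (G 0) (G 1) _ 0 (1/3) (by norm_num) (d1 0) (d1 1)
  have e3 := incr_eq (G 0) (G 1) _ (2/3) 1 (by norm_num) (d3 0) (d3 1)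
  have e20 := hloop 0 (G 0) (d2 0)
  have e21 := hloop 1 (G 1) (d2 1)
  have z0 := hG0 0
  have z1 := hG0 1
  rw [hγ0] at z0 z1
  push_cast at e20 e21
  apply hN
  linear_combination (z0 - z1) + e20 - e21 + hG1 1 - hG1 0 + e1 + e3

lemma cont_inv (Ω : Set ℂ) (hiso : ∀ x, ∃ R > 0, ∀ z ∈ ball x R, z ≠ x → z ∉ Ω)
    (a : ℂ) (ha : a ∈ Ω) (ha0 : a ≠ 0) : OmegaCont Ω (fun ζ => (ζ - a)⁻¹) := by
  obtain ⟨R, hR, h⟩ := hiso 0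
  have hinv : ∀ z, z ≠ a → AnalyticAt ℂ (fun ζ : ℂ => (ζ - a)⁻¹) z := by
    intro z hz
    exact AnalyticAt.inv (by fun_prop) (sub_ne_zero.mpr hz)
  refine ⟨R, hR, ?_, h, ?_⟩
  · intro z hz
    refine hinv z ?_
    rintro rfl
    exact h z hz ha0 ha
  · intro γ _ _ _ hav
    refine ⟨fun ζ => (ζ - a)⁻¹, fun _ ζ => (ζ - a)⁻¹, fun t => ‖γ t - a‖, ?_, ?_, ?_, ?_⟩
    · intro t ht
      refine ⟨norm_pos_iff.mpr (sub_ne_zero.mpr fun h => hav t ht (h ▸ ha)), ?_⟩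
      intro z hz
      refine hinv z ?_
      rintro rfl
      rw [mem_ball, dist_comm, dist_eq_norm] at hz
      exact lt_irrefl _ hz
    · exact fun t _ => ⟨1, one_pos, fun t' _ _ z _ => rfl⟩
    · exact Eventually.of_forall fun _ => rfl
    · exact Eventually.of_forall fun _ => rfl

lemma not_cont (Ω : Set ℂ) (hΩ : Ω.Countable)
    (hiso : ∀ x, ∃ R > 0, ∀ z ∈ ball x R, z ≠ x → z ∉ Ω)
    (a b : ℂ) (ha : a ∈ Ω) (hb : b ∈ Ω) (ha0 : a ≠ 0) (hb0 : b ≠ 0) (hab : a + b ∉ Ω) :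
    ¬ OmegaCont Ω (conv (fun ζ => (ζ - a)⁻¹) (fun ζ => (ζ - b)⁻¹)) := by
  rintro ⟨R, hR, -, hRΩ, hc⟩
  have hs : ‖((R / 2 : ℝ) : ℂ)‖ = R / 2 := by
    rw [Complex.norm_real, Real.norm_of_nonneg (by linarith)]
  have hs0 : ((R / 2 : ℝ) : ℂ) ≠ 0 := by
    intro h; rw [h, norm_zero] at hs; linarith
  have hsR : ((R / 2 : ℝ) : ℂ) ∈ ball (0:ℂ) R := by
    rw [mem_ball_zero_iff, hs]; linarith
  have hbig : ∀ c ∈ Ω, c ≠ 0 → ‖((R / 2 : ℝ) : ℂ)‖ < ‖c‖ := by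
    intro c hc hc0
    by_contra! h
    refine hRΩ c ?_ hc0 hc
    rw [mem_ball_zero_iff]; rw [hs] at h; linarith
  obtain ⟨γ, g1, g2, -, g4, g5⟩ := main_path Ω hΩ hiso a b _ ha hb ha0 hb0 hab
    (hRΩ _ hsR hs0) (hbig a ha ha0) (hbig b hb hb0)
  exact g5 (hc γ g1 (by rw [g2]; exact hsR) (by rw [g2]; exact hs0) g4)

lemma iso_of_discrete (Ω : Set ℂ) (hc : IsClosed Ω) (hd : DiscreteTopology Ω) :
    ∀ x, ∃ R > 0, ∀ z ∈ ball x R, z ≠ x → z ∉ Ω := by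
  intro x
  have h := (isClosed_and_discrete_iff.mp ⟨hc, ⟨hd⟩⟩) x
  rw [disjoint_principal_right, mem_nhdsWithin] at h
  obtain ⟨u, hu, hxu, hsub⟩ := h
  obtain ⟨R, hR, hRu⟩ := Metric.isOpen_iff.mp hu x hxu
  exact ⟨R, hR, fun z hz hzx => hsub ⟨hRu hz, hzx⟩⟩

/-- The germs `1/(ζ-ω₁)` and `1/(ζ-ω₂)` are `{ω₁,ω₂}`-continuable but their
convolution is not: there is a path from `0` to `ω₁+ω₂` avoiding `ω₁, ω₂` along
which the convolution admits no analytic continuation.  Consequently, if a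
non-empty closed discrete `Ω` is not stable under addition, then the space of
`Ω`-continuable germs is not stable under convolution. -/
theorem stmt1 (ω₁ ω₂ : ℂ) (h₁ : ω₁ ≠ 0) (h₂ : ω₂ ≠ 0) :
    OmegaCont {ω₁, ω₂} (fun ζ => (ζ - ω₁)⁻¹) ∧
    OmegaCont {ω₁, ω₂} (fun ζ => (ζ - ω₂)⁻¹) ∧
    ¬ OmegaCont {ω₁, ω₂} (conv (fun ζ => (ζ - ω₁)⁻¹) (fun ζ => (ζ - ω₂)⁻¹)) ∧
    (∃ γ : ℝ → ℂ, PiecewiseC1On γ 0 1 ∧ γ 0 = 0 ∧ γ 1 = ω₁ + ω₂ ∧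
      (∀ t ∈ Set.Icc (0:ℝ) 1, γ t ≠ ω₁ ∧ γ t ≠ ω₂) ∧
      ¬ ContinuableAlong (conv (fun ζ => (ζ - ω₁)⁻¹) (fun ζ => (ζ - ω₂)⁻¹)) γ 0 1) ∧
    (∀ Ω : Set ℂ, Ω.Nonempty → IsClosed Ω → DiscreteTopology Ω →
      (¬ ∀ a ∈ Ω, ∀ b ∈ Ω, a + b ∈ Ω) →
      ¬ ∀ f g : ℂ → ℂ, OmegaCont Ω f → OmegaCont Ω g → OmegaCont Ω (conv f g)) := by
  have hfin : ({ω₁, ω₂} : Set ℂ).Finite := Set.toFinite _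
  have hiso := iso_of_discrete {ω₁, ω₂} hfin.isClosed hfin.isDiscrete.to_subtype
  have hmem : ω₁ + ω₂ ∉ ({ω₁, ω₂} : Set ℂ) := by simp [h₁, h₂]
  have h0 : (0:ℂ) ∉ ({ω₁, ω₂} : Set ℂ) := by simp [h₁.symm, h₂.symm]
  refine ⟨cont_inv _ hiso _ (by simp) h₁, cont_inv _ hiso _ (by simp) h₂,
    not_cont _ hfin.countable hiso _ _ (by simp) (by simp) h₁ h₂ hmem, ?_, ?_⟩
  · obtain ⟨γ, g1, g2, g3, g4, g5⟩ := main_path _ hfin.countable hiso ω₁ ω₂ 0 (by simp) (by simp)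
      h₁ h₂ hmem h0 (by simpa using h₁) (by simpa using h₂)
    refine ⟨γ, g1, g2, g3, fun t ht => ?_, g5⟩
    have := g4 t ht
    simpa using this
  · intro Ω _ hcl hd hadd hst
    push Not at hadd
    obtain ⟨a, ha, b, hb, hab⟩ := hadd
    have ha0 : a ≠ 0 := by rintro rfl; exact hab (by simpa using hb)
    have hb0 : b ≠ 0 := by rintro rfl; exact hab (by simpa using ha)
    have hiso' := iso_of_discrete Ω hcl hd
    have hcount : Ω.Countable := Set.countable_coe_iff.mp countable_of_Lindelof_of_discrete
    exact not_cont Ω hcount hiso' a b ha hb ha0 hb0 hab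
      (hst _ _ (cont_inv Ω hiso' a ha ha0) (cont_inv Ω hiso' b hb hb0))
end
end
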